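/- Let R be a vertex-transitive q × q real matrix whose support graph (i ≠ j adjacent iff R i j ≠ 0) is connected and whose common row sum equals 1, let χ(X) = ∏ (1 − λ·X) over the q − 1 eigenvalues λ of R (with multiplicity) other than the simple eigenvalue 1, and let σ > 0. Then for every sequence m : ℕ → ℕ for which there exist 0 < a ≤ b < 1/2 with a ≤ m(n)/n ≤ b for all large n, the ratio g^{(0)}_{R,σ}(n, m(n)) / [ (n^{2m}/(2^m · m!)) · (1 − 2m/n)^{(1−σ)/2} · (qσ)^{n−m} · χ(2m/n)^{−σ/2} ] tends to 1 as n → ∞ (where m = m(n)). -/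

import Mathlib

namespace Inhomog

noncomputable section

/-- Compensation factor of a multigraph given as a multiset of unordered pairs. -/
def kappa {n : ℕ} (E : Multiset (Sym2 (Fin n))) : ℚ :=
  (∏ v : Fin n, ((2 : ℚ) ^ (E.count s(v, v)))⁻¹) *
    ∏ e ∈ E.toFinset, ((E.count e).factorial : ℚ)⁻¹

/-- Support graph of a multigraph: `u ≠ v` adjacent iff `s(u,v) ∈ E`. -/
def supportGraph {n : ℕ} (E : Multiset (Sym2 (Fin n))) : SimpleGraph (Fin n) :=
  SimpleGraph.fromRel fun u v => s(u, v) ∈ E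

/-- Number of connected components of the support graph. -/
def cc {n : ℕ} (E : Multiset (Sym2 (Fin n))) : ℕ :=
  Nat.card (supportGraph E).ConnectedComponent

/-- Weight of a colored multigraph. -/
def weight {q n : ℕ} (R : Matrix (Fin q) (Fin q) ℝ) (σ : ℝ)
    (E : Multiset (Sym2 (Fin n))) (c : Fin n → Fin q) : ℝ :=
  (kappa E : ℝ) * σ ^ cc E *
    ∏ e ∈ E.toFinset, (R (c e.inf) (c e.sup)) ^ (E.count e)

/-- Total weight of `(R,σ)`-multigraphs with `n` vertices and `m` edges. -/
def g {q : ℕ} (R : Matrix (Fin q) (Fin q) ℝ) (σ : ℝ) (n m : ℕ) : ℝ :=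
  ∑ E : Sym (Sym2 (Fin n)) m, ∑ c : Fin n → Fin q, weight R σ E.1 c

/-- A matrix is vertex-transitive if it is symmetric, has nonnegative entries,
and its automorphism group acts transitively on indices. -/
def IsVertexTransitive {q : ℕ} (R : Matrix (Fin q) (Fin q) ℝ) : Prop :=
  R.IsSymm ∧ (∀ i j, 0 ≤ R i j) ∧
    ∀ i j : Fin q, ∃ π : Equiv.Perm (Fin q), π i = j ∧ ∀ a b, R (π a) (π b) = R a b


open scoped Classical in
/-- Number of edges of `E` (with multiplicity) whose endpoints lie in the
connected component `K` of the support graph. -/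
def edgesIn {n : ℕ} (E : Multiset (Sym2 (Fin n)))
    (K : (supportGraph E).ConnectedComponent) : ℕ :=
  Multiset.card
    (E.filter fun e => ∀ v ∈ e, (supportGraph E).connectedComponentMk v = K)

/-- Number of vertices of the connected component `K` of the support graph. -/
def vertsIn {n : ℕ} (E : Multiset (Sym2 (Fin n)))
    (K : (supportGraph E).ConnectedComponent) : ℕ :=
  Nat.card K.supp

/-- Excess of the complex part of `E`: `Σ_S max (0, e_S − |S|)` over the
connected components `S` of the support graph. -/
def complexExcess {n : ℕ} (E : Multiset (Sym2 (Fin n))) : ℕ :=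
  ∑ᶠ K : (supportGraph E).ConnectedComponent, (edgesIn E K - vertsIn E K)

/-- `E` has no complex component. -/
def NoComplex {n : ℕ} (E : Multiset (Sym2 (Fin n))) : Prop :=
  ∀ K : (supportGraph E).ConnectedComponent, edgesIn E K ≤ vertsIn E K

open scoped Classical in
/-- Total weight of `(R,σ)`-multigraphs with no complex component. -/
def g0 {q : ℕ} (R : Matrix (Fin q) (Fin q) ℝ) (σ : ℝ) (n m : ℕ) : ℝ :=
  ∑ E : Sym (Sym2 (Fin n)) m, ∑ c : Fin n → Fin q,
    if NoComplex E.1 then weight R σ E.1 c else 0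

open scoped Classical in
/-- Total weight of `(R,σ)`-multigraphs whose complex part has excess `k`. -/
def gk {q : ℕ} (R : Matrix (Fin q) (Fin q) ℝ) (σ : ℝ) (n m k : ℕ) : ℝ :=
  ∑ E : Sym (Sym2 (Fin n)) m, ∑ c : Fin n → Fin q,
    if complexExcess E.1 = k then weight R σ E.1 c else 0

section Graph
open scoped Classical

variable {n : ℕ}

/-- Reachability in the support graph. -/
def Rch (E : Multiset (Sym2 (Fin n))) (u v : Fin n) : Prop := (supportGraph E).Reachable u v

lemma Rch.refl (E : Multiset (Sym2 (Fin n))) (u : Fin n) : Rch E u u := SimpleGraph.Reachable.refl u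
lemma Rch.symm {E : Multiset (Sym2 (Fin n))} {u v : Fin n} (h : Rch E u v) : Rch E v u :=
  SimpleGraph.Reachable.symm h
lemma Rch.trans {E : Multiset (Sym2 (Fin n))} {u v w : Fin n} (h : Rch E u v) (h' : Rch E v w) :
    Rch E u w := SimpleGraph.Reachable.trans h h'
lemma rch_comm {E : Multiset (Sym2 (Fin n))} {u v : Fin n} : Rch E u v ↔ Rch E v u :=
  ⟨Rch.symm, Rch.symm⟩

lemma rch_of_mem {E : Multiset (Sym2 (Fin n))} {u v : Fin n} (h : s(u, v) ∈ E) : Rch E u v := by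
  by_cases huv : u = v
  · subst huv; exact Rch.refl _ _
  · apply SimpleGraph.Adj.reachable
    simp [supportGraph, huv, h]

lemma rch_mono {E E' : Multiset (Sym2 (Fin n))} (hE : ∀ e ∈ E, e ∈ E') {u v : Fin n}
    (h : Rch E u v) : Rch E' u v := by
  apply SimpleGraph.Reachable.mono _ h
  intro a b hab
  simp only [supportGraph, SimpleGraph.fromRel_adj] at hab ⊢
  exact ⟨hab.1, hab.2.imp (hE _) (hE _)⟩

lemma rch_cons_of {E : Multiset (Sym2 (Fin n))} {e : Sym2 (Fin n)} {u v : Fin n}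
    (h : Rch E u v) : Rch (e ::ₘ E) u v :=
  rch_mono (fun _ h => Multiset.mem_cons_of_mem h) h

lemma rch_induct {E : Multiset (Sym2 (Fin n))} {u : Fin n} {P : Fin n → Prop} (h0 : P u)
    (hs : ∀ a b, s(a, b) ∈ E → P a → P b) {v : Fin n} (h : Rch E u v) : P v := by
  obtain ⟨w⟩ := h
  induction w with
  | nil => exact h0
  | cons hadj _ ih =>
    apply ih
    simp only [supportGraph, SimpleGraph.fromRel_adj] at hadj
    rcases hadj.2 with h | h
    · exact hs _ _ h h0
    · exact hs _ _ (Sym2.eq_swap ▸ h) h0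

lemma rch_cons {E : Multiset (Sym2 (Fin n))} {x y u v : Fin n} :
    Rch (s(x, y) ::ₘ E) u v ↔
      Rch E u v ∨ (Rch E u x ∧ Rch E y v) ∨ (Rch E u y ∧ Rch E x v) := by
  constructor
  · intro h
    refine rch_induct (P := fun v => Rch E u v ∨ (Rch E u x ∧ Rch E y v) ∨ (Rch E u y ∧ Rch E x v))
      (Or.inl (Rch.refl _ _)) ?_ h
    intro a b hab hP
    rw [Multiset.mem_cons] at hab
    rcases hab with hab | hab
    · rw [Sym2.eq_iff] at hab
      rcases hab with ⟨rfl, rfl⟩ | ⟨rfl, rfl⟩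
      · rcases hP with h | h | h
        · exact Or.inr (Or.inl ⟨h, Rch.refl _ _⟩)
        · exact Or.inr (Or.inl ⟨h.1, Rch.refl _ _⟩)
        · exact Or.inl h.1
      · rcases hP with h | h | h
        · exact Or.inr (Or.inr ⟨h, Rch.refl _ _⟩)
        · exact Or.inl h.1
        · exact Or.inr (Or.inr ⟨h.1, Rch.refl _ _⟩)
    · have := rch_of_mem hab
      rcases hP with h | h | h
      · exact Or.inl (h.trans this)
      · exact Or.inr (Or.inl ⟨h.1, h.2.trans this⟩)
      · exact Or.inr (Or.inr ⟨h.1, h.2.trans this⟩)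
  · have hxy : Rch (s(x, y) ::ₘ E) x y := rch_of_mem (Multiset.mem_cons_self _ _)
    rintro (h | h | h)
    · exact rch_cons_of h
    · exact ((rch_cons_of h.1).trans hxy).trans (rch_cons_of h.2)
    · exact ((rch_cons_of h.1).trans hxy.symm).trans (rch_cons_of h.2)

lemma rch_cons_same {E : Multiset (Sym2 (Fin n))} {x y : Fin n} (h : Rch E x y) (u v : Fin n) :
    Rch (s(x, y) ::ₘ E) u v ↔ Rch E u v := by
  rw [rch_cons]
  constructor
  · rintro (h' | h' | h')
    · exact h'
    · exact (h'.1.trans h).trans h'.2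
    · exact (h'.1.trans h.symm).trans h'.2
  · exact Or.inl

/-- Component of a vertex. -/
def cp (E : Multiset (Sym2 (Fin n))) (v : Fin n) : Finset (Fin n) :=
  Finset.univ.filter (fun u => Rch E u v)

@[simp] lemma mem_cp {E : Multiset (Sym2 (Fin n))} {u v : Fin n} : u ∈ cp E v ↔ Rch E u v := by
  simp [cp]

lemma cp_congr {E : Multiset (Sym2 (Fin n))} {u v : Fin n} (h : Rch E u v) : cp E u = cp E v := by
  ext w; simp only [mem_cp]; exact ⟨fun h' => h'.trans h, fun h' => h'.trans h.symm⟩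

def vv (E : Multiset (Sym2 (Fin n))) (v : Fin n) : ℕ := (cp E v).card

def ev (E : Multiset (Sym2 (Fin n))) (v : Fin n) : ℕ :=
  Multiset.card (E.filter fun e => ∀ w ∈ e, Rch E w v)

lemma vv_congr {E : Multiset (Sym2 (Fin n))} {u v : Fin n} (h : Rch E u v) : vv E u = vv E v := by
  rw [vv, cp_congr h, vv]

lemma ev_congr {E : Multiset (Sym2 (Fin n))} {u v : Fin n} (h : Rch E u v) : ev E u = ev E v := by
  have : ∀ w, Rch E w u ↔ Rch E w v := fun w => ⟨fun h' => h'.trans h, fun h' => h'.trans h.symm⟩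
  simp only [ev, this]

lemma vv_pos (E : Multiset (Sym2 (Fin n))) (v : Fin n) : 0 < vv E v :=
  Finset.card_pos.mpr ⟨v, by simpa using Rch.refl E v⟩

lemma vv_cons_same {E : Multiset (Sym2 (Fin n))} {x y : Fin n} (h : Rch E x y) (v : Fin n) :
    vv (s(x, y) ::ₘ E) v = vv E v := by
  simp only [vv, cp, rch_cons_same h]

lemma ev_cons_same {E : Multiset (Sym2 (Fin n))} {x y : Fin n} (h : Rch E x y) (v : Fin n) :
    ev (s(x, y) ::ₘ E) v = ev E v + if Rch E x v then 1 else 0 := by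
  simp only [ev, rch_cons_same h]
  by_cases hx : Rch E x v
  · have hy : Rch E y v := h.symm.trans hx
    rw [Multiset.filter_cons_of_pos]
    · simp [hx]
    · simp [hx, hy]
  · rw [Multiset.filter_cons_of_neg]
    · simp [hx]
    · simp [hx]

lemma cp_cons_diff {E : Multiset (Sym2 (Fin n))} {x y : Fin n} {v : Fin n}
    (hv : Rch E x v) : cp (s(x, y) ::ₘ E) v = cp E x ∪ cp E y := by
  ext w
  simp only [mem_cp, Finset.mem_union, rch_cons]
  constructor
  · rintro (h | h | h)
    · exact Or.inl (h.trans hv.symm)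
    · exact Or.inl h.1
    · exact Or.inr h.1
  · rintro (h | h)
    · exact Or.inl (h.trans hv)
    · exact Or.inr (Or.inr ⟨h, hv⟩)

lemma vv_cons_diff {E : Multiset (Sym2 (Fin n))} {x y : Fin n} (h : ¬ Rch E x y) {v : Fin n}
    (hv : Rch E x v) : vv (s(x, y) ::ₘ E) v = vv E x + vv E y := by
  rw [vv, cp_cons_diff hv, Finset.card_union_of_disjoint]; rfl
  rw [Finset.disjoint_left]
  intro w h1 h2
  simp only [mem_cp] at h1 h2
  exact h (h1.symm.trans h2)

lemma rch_cons_other {E : Multiset (Sym2 (Fin n))} {x y : Fin n} {v : Fin n}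
    (hx : ¬ Rch E x v) (hy : ¬ Rch E y v) (u : Fin n) :
    Rch (s(x, y) ::ₘ E) u v ↔ Rch E u v := by
  rw [rch_cons]; simp [hx, hy]

lemma vv_cons_other {E : Multiset (Sym2 (Fin n))} {x y : Fin n} {v : Fin n}
    (hx : ¬ Rch E x v) (hy : ¬ Rch E y v) : vv (s(x, y) ::ₘ E) v = vv E v := by
  simp only [vv, cp, rch_cons_other hx hy]

lemma ev_cons_other {E : Multiset (Sym2 (Fin n))} {x y : Fin n} {v : Fin n}
    (hx : ¬ Rch E x v) (hy : ¬ Rch E y v) : ev (s(x, y) ::ₘ E) v = ev E v := by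
  simp only [ev, rch_cons_other hx hy]
  rw [Multiset.filter_cons_of_neg]
  simp [hx]

lemma edge_rch_iff {E : Multiset (Sym2 (Fin n))} {e : Sym2 (Fin n)} (he : e ∈ E) {v w : Fin n}
    (hw : w ∈ e) : (∀ w ∈ e, Rch E w v) ↔ Rch E w v := by
  induction e using Sym2.ind with
  | _ a b =>
    have := rch_of_mem he
    simp only [Sym2.mem_iff] at hw ⊢
    constructor
    · intro h; exact h w hw
    · rintro h z hz
      rcases hw with rfl | rfl <;> rcases hz with rfl | rfl
      · exact h
      · exact this.symm.trans h
      · exact this.trans h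
      · exact h

lemma ev_cons_diff {E : Multiset (Sym2 (Fin n))} {x y : Fin n} (h : ¬ Rch E x y) {v : Fin n}
    (hv : Rch E x v) : ev (s(x, y) ::ₘ E) v = ev E x + ev E y + 1 := by
  have key : ∀ w, Rch (s(x, y) ::ₘ E) w v ↔ Rch E w x ∨ Rch E w y := by
    intro w
    have := congrArg (w ∈ ·) (cp_cons_diff (y := y) hv)
    simpa using this
  simp only [ev, key]
  rw [Multiset.filter_cons_of_pos _ (by
    intro w hw
    rw [Sym2.mem_iff] at hw
    rcases hw with rfl | rfl
    · exact Or.inl (Rch.refl _ _)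
    · exact Or.inr (Rch.refl _ _))]
  rw [Multiset.card_cons, ← Multiset.card_add, Multiset.filter_add_filter]
  have h1 : E.filter (fun e => ∀ w ∈ e, Rch E w x ∨ Rch E w y)
      = E.filter (fun e => (∀ w ∈ e, Rch E w x) ∨ (∀ w ∈ e, Rch E w y)) := by
    apply Multiset.filter_congr
    intro e he
    induction e using Sym2.ind with
    | _ a b =>
      rw [edge_rch_iff he (Sym2.mem_mk_left a b), edge_rch_iff he (Sym2.mem_mk_left a b)]
      have hab := rch_of_mem he
      constructor
      · intro h; exact h a (Sym2.mem_mk_left a b)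
      · intro h w hw
        rw [Sym2.mem_iff] at hw
        rcases hw with rfl | rfl
        · exact h
        · exact h.imp (hab.symm.trans ·) (hab.symm.trans ·)
  have h2 : E.filter (fun e => (∀ w ∈ e, Rch E w x) ∧ (∀ w ∈ e, Rch E w y)) = 0 := by
    rw [Multiset.filter_eq_nil]
    rintro e he ⟨h1, h2⟩
    induction e using Sym2.ind with
    | _ a b =>
    exact h ((h1 a (Sym2.mem_mk_left a b)).symm.trans (h2 a (Sym2.mem_mk_left a b)))
  rw [h1, h2, add_zero]

lemma vv_le_ev (E : Multiset (Sym2 (Fin n))) : ∀ v, vv E v ≤ ev E v + 1 := by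
  induction E using Multiset.induction with
  | empty =>
    intro v
    have : cp (0 : Multiset (Sym2 (Fin n))) v = {v} := by
      ext w
      simp only [mem_cp, Finset.mem_singleton]
      constructor
      · intro h
        exact (rch_induct (P := fun z => w = z) rfl (by simp) h)
      · rintro rfl; exact Rch.refl _ _
    simp [vv, this]
  | cons e E ih =>
    induction e using Sym2.ind with
    | _ x y =>
    intro v
    by_cases h : Rch E x y
    · rw [vv_cons_same h, ev_cons_same h]
      have := ih v
      omega
    · by_cases hx : Rch E x v
      · rw [vv_cons_diff h hx, ev_cons_diff h hx]
        have := ih x; have := ih y; omega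
      · by_cases hy : Rch E y v
        · rw [Sym2.eq_swap, vv_cons_diff (fun h' => h h'.symm) hy, ev_cons_diff (fun h' => h h'.symm) hy]
          have := ih x; have := ih y; omega
        · rw [vv_cons_other hx hy, ev_cons_other hx hy]; exact ih v

/-- tree component -/
def Tr (E : Multiset (Sym2 (Fin n))) (v : Fin n) : Prop := ev E v < vv E v

def Nc (E : Multiset (Sym2 (Fin n))) : Prop := ∀ v, ev E v ≤ vv E v

lemma tr_congr {E : Multiset (Sym2 (Fin n))} {u v : Fin n} (h : Rch E u v) : Tr E u ↔ Tr E v := by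
  rw [Tr, Tr, vv_congr h, ev_congr h]

lemma noComplex_iff (E : Multiset (Sym2 (Fin n))) : NoComplex E ↔ Nc E := by
  have h1 : ∀ v, edgesIn E ((supportGraph E).connectedComponentMk v) = ev E v := by
    intro v
    rw [edgesIn, ev, ← Multiset.countP_eq_card_filter, ← Multiset.countP_eq_card_filter]
    apply Multiset.countP_congr rfl
    intro e _
    simp only [SimpleGraph.ConnectedComponent.eq, Rch]
  have h2 : ∀ v, vertsIn E ((supportGraph E).connectedComponentMk v) = vv E v := by
    intro v
    rw [vertsIn, vv, Nat.card_eq_card_toFinset]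
    congr 1
    ext w
    simp [Rch, SimpleGraph.ConnectedComponent.mem_supp_iff]
  constructor
  · intro h v
    rw [← h1, ← h2]; exact h _
  · intro h K
    induction K using SimpleGraph.ConnectedComponent.ind with
    | h v => rw [h1, h2]; exact h v

/- adding a bridge -/
lemma nc_cons_diff {E : Multiset (Sym2 (Fin n))} {x y : Fin n} (h : ¬ Rch E x y) :
    Nc (s(x, y) ::ₘ E) ↔ Nc E ∧ (Tr E x ∨ Tr E y) := by
  have h' : ¬ Rch E y x := fun h' => h h'.symm
  constructor
  · intro H
    have hx := H x
    rw [vv_cons_diff h (Rch.refl _ _), ev_cons_diff h (Rch.refl _ _)] at hx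
    have e1 := vv_le_ev E x
    have e2 := vv_le_ev E y
    refine ⟨fun v => ?_, ?_⟩
    · by_cases hx : Rch E x v
      · rw [← vv_congr hx, ← ev_congr hx]; omega
      · by_cases hy : Rch E y v
        · rw [← vv_congr hy, ← ev_congr hy]; omega
        · rw [← vv_cons_other hx hy, ← ev_cons_other hx hy]; exact H v
    · simp only [Tr]; omega
  · rintro ⟨H, H'⟩ v
    have e1 := H x
    have e2 := H y
    simp only [Tr] at H'
    by_cases hx : Rch E x v
    · rw [vv_cons_diff h hx, ev_cons_diff h hx]; omega
    · by_cases hy : Rch E y v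
      · rw [Sym2.eq_swap, vv_cons_diff h' hy, ev_cons_diff h' hy]; omega
      · rw [vv_cons_other hx hy, ev_cons_other hx hy]; exact H v

lemma tr_cons_diff {E : Multiset (Sym2 (Fin n))} {x y : Fin n} (h : ¬ Rch E x y) {v : Fin n}
    (hv : Rch E x v) : Tr (s(x, y) ::ₘ E) v ↔ Tr E x ∧ Tr E y := by
  have e1 := vv_le_ev E x
  have e2 := vv_le_ev E y
  simp only [Tr]
  rw [vv_cons_diff h hv, ev_cons_diff h hv]; omega

lemma tr_cons_diff' {E : Multiset (Sym2 (Fin n))} {x y : Fin n} (h : ¬ Rch E x y) {v : Fin n}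
    (hv : Rch E y v) : Tr (s(x, y) ::ₘ E) v ↔ Tr E x ∧ Tr E y := by
  rw [Sym2.eq_swap, tr_cons_diff (fun h' => h h'.symm) hv, and_comm]

lemma tr_cons_other {E : Multiset (Sym2 (Fin n))} {x y : Fin n} {v : Fin n}
    (hx : ¬ Rch E x v) (hy : ¬ Rch E y v) : Tr (s(x, y) ::ₘ E) v ↔ Tr E v := by
  rw [Tr, vv_cons_other hx hy, ev_cons_other hx hy, Tr]

lemma nc_cons_same {E : Multiset (Sym2 (Fin n))} {x y : Fin n} (h : Rch E x y) :
    Nc (s(x, y) ::ₘ E) ↔ Nc E ∧ Tr E x := by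
  simp only [Nc, Tr, vv_cons_same h, ev_cons_same h]
  constructor
  · intro H
    refine ⟨fun v => ?_, ?_⟩
    · have := H v; omega
    · have := H x; rw [if_pos (Rch.refl _ _)] at this; omega
  · rintro ⟨H, H'⟩ v
    split_ifs with hx
    · rw [← vv_congr hx, ← ev_congr hx]; omega
    · exact H v

lemma tr_cons_same {E : Multiset (Sym2 (Fin n))} {x y : Fin n} (h : Rch E x y) {v : Fin n} :
    Tr (s(x, y) ::ₘ E) v ↔ Tr E v ∧ ¬ Rch E x v := by
  have := vv_le_ev E v
  simp only [Tr, vv_cons_same h, ev_cons_same h]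
  split_ifs with hx <;> simp [hx] ; omega

/-- existence of a cycle edge in non-tree components -/
lemma exists_cycle_edge (E : Multiset (Sym2 (Fin n))) : ∀ v, ¬ Tr E v →
    ∃ x y, s(x, y) ∈ E ∧ Rch (E.erase s(x, y)) x y ∧ Rch (E.erase s(x, y)) x v := by
  suffices H : ∀ v, ¬ Tr E v → ∃ x y E', E = s(x, y) ::ₘ E' ∧ Rch E' x y ∧ Rch E' x v by
    intro v hv
    obtain ⟨x, y, E', rfl, h⟩ := H v hv
    refine ⟨x, y, Multiset.mem_cons_self _ _, ?_⟩
    rwa [Multiset.erase_cons_head]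
  induction E using Multiset.induction with
  | empty =>
    intro v hv
    exfalso; apply hv
    have := vv_pos (0 : Multiset (Sym2 (Fin n))) v
    simpa [Tr, ev] using this
  | cons e E ih =>
    induction e using Sym2.ind with
    | _ x y =>
    intro v hv
    have lift : ∀ w, Rch (s(x, y) ::ₘ E) w v → ¬ Tr E w →
        ∃ x' y' E', s(x, y) ::ₘ E = s(x', y') ::ₘ E' ∧ Rch E' x' y' ∧ Rch E' x' v := by
      intro w hw hT
      obtain ⟨a, b, E', rfl, h1, h2⟩ := ih w hT
      refine ⟨a, b, s(x, y) ::ₘ E', Multiset.cons_swap _ _ _, rch_cons_of h1, ?_⟩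
      have : Rch (s(x, y) ::ₘ E') w v := by
        rw [Multiset.cons_swap, rch_cons_same (rch_cons_of h1)] at hw
        exact hw
      exact (rch_cons_of h2).trans this
    by_cases h : Rch E x y
    · by_cases hx : Rch E x v
      · exact ⟨x, y, E, rfl, h, hx⟩
      · rw [tr_cons_same h] at hv
        exact lift v (Rch.refl _ _) (by tauto)
    · have hxy : Rch (s(x, y) ::ₘ E) x y := rch_of_mem (Multiset.mem_cons_self _ _)
      by_cases hx : Rch E x v
      · rw [tr_cons_diff h hx] at hv
        by_cases hT : Tr E x
        · exact lift y (hxy.symm.trans (rch_cons_of hx)) (by tauto)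
        · exact lift x (rch_cons_of hx) hT
      · by_cases hy : Rch E y v
        · rw [tr_cons_diff' h hy] at hv
          by_cases hT : Tr E x
          · exact lift y (rch_cons_of hy) (by tauto)
          · exact lift x (hxy.trans (rch_cons_of hy)) hT
        · rw [tr_cons_other hx hy] at hv
          exact lift v (Rch.refl _ _) hv

/-- `e` is the parent edge of `u` in the tree rooted at `v`. The other graph is the one without `e`. -/
def Good (E' : Multiset (Sym2 (Fin n))) (v u : Fin n) (e : Sym2 (Fin n)) : Prop :=
  ∃ x, e = s(x, u) ∧ Rch E' x v ∧ ¬ Rch E' u v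

lemma good_mk {E' : Multiset (Sym2 (Fin n))} {v u p r : Fin n} :
    Good E' v u s(p, r) ↔
      (u = r ∧ Rch E' p v ∧ ¬ Rch E' r v) ∨ (u = p ∧ Rch E' r v ∧ ¬ Rch E' p v) := by
  simp only [Good, Sym2.eq_iff]
  constructor
  · rintro ⟨x, (⟨rfl, rfl⟩ | ⟨rfl, rfl⟩), h⟩
    · exact Or.inl ⟨rfl, h⟩
    · exact Or.inr ⟨rfl, h⟩
  · rintro (⟨rfl, h⟩ | ⟨rfl, h⟩)
    · exact ⟨p, Or.inl ⟨rfl, rfl⟩, h⟩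
    · exact ⟨r, Or.inr ⟨rfl, rfl⟩, h⟩

lemma good_unique {E'' : Multiset (Sym2 (Fin n))} {v u : Fin n} {e e' : Sym2 (Fin n)}
    (h : Good (e' ::ₘ E'') v u e) (h' : Good (e ::ₘ E'') v u e') : False := by
  obtain ⟨x, rfl, h1, h2⟩ := h
  obtain ⟨x', rfl, h3, h4⟩ := h'
  have a1 : Rch (s(x, u) ::ₘ E'') x u := rch_of_mem (Multiset.mem_cons_self _ _)
  have a2 : Rch (s(x', u) ::ₘ E'') x' u := rch_of_mem (Multiset.mem_cons_self _ _)
  have b1 : ¬ Rch (s(x, u) ::ₘ E'') x v := fun h => h4 (a1.symm.trans h)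
  have b2 : ¬ Rch (s(x', u) ::ₘ E'') x' v := fun h => h2 (a2.symm.trans h)
  rw [rch_cons] at h1 h3
  rw [rch_cons] at b1 b2 h2 h4
  tauto

lemma good_card_le (E : Multiset (Sym2 (Fin n))) (v u : Fin n) :
    Multiset.card (E.filter (fun e => Good (E.erase e) v u e)) ≤ 1 := by
  by_contra hcon
  push Not at hcon
  set F := E.filter (fun e => Good (E.erase e) v u e) with hF
  obtain ⟨e, e', he⟩ : ∃ e e', e ::ₘ e' ::ₘ 0 ≤ F := by
    obtain ⟨a, ha⟩ := Multiset.card_pos_iff_exists_mem.mp (by omega : 0 < Multiset.card F)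
    obtain ⟨F1, hF1⟩ := Multiset.exists_cons_of_mem ha
    rw [hF1, Multiset.card_cons] at hcon
    obtain ⟨b, hb⟩ := Multiset.card_pos_iff_exists_mem.mp (by omega : 0 < Multiset.card F1)
    obtain ⟨F2, hF2⟩ := Multiset.exists_cons_of_mem hb
    refine ⟨a, b, ?_⟩
    rw [hF1, hF2]
    exact Multiset.cons_le_cons _ (Multiset.cons_le_cons _ (Multiset.zero_le _))
  have hm : e ∈ F := Multiset.mem_of_le he (by simp)
  have hm' : e' ∈ F := Multiset.mem_of_le he (by simp)
  obtain ⟨E'', hE⟩ := Multiset.le_iff_exists_add.mp (he.trans (Multiset.filter_le _ E))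
  have hE1 : E = e ::ₘ e' ::ₘ E'' := by rw [hE]; simp
  have hE2 : E = e' ::ₘ e ::ₘ E'' := by rw [hE1, Multiset.cons_swap]
  have g1 := (Multiset.mem_filter.mp hm).2
  have g2 := (Multiset.mem_filter.mp hm').2
  rw [hE1, Multiset.erase_cons_head] at g1
  rw [hE2, Multiset.erase_cons_head] at g2
  exact good_unique g1 g2

lemma good_count {E : Multiset (Sym2 (Fin n))} {v : Fin n} (hT : Tr E v) {e : Sym2 (Fin n)}
    (he : e ∈ E) : (((cp E v).erase v).filter (fun u => Good (E.erase e) v u e)).card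
      = if ∀ w ∈ e, Rch E w v then 1 else 0 := by
  obtain ⟨E', rfl⟩ := Multiset.exists_cons_of_mem he
  rw [Multiset.erase_cons_head]
  induction e using Sym2.ind with
  | _ p r =>
  simp only [edge_rch_iff he (Sym2.mem_mk_left p r)]
  simp only [good_mk]
  by_cases hpr : Rch E' p r
  · rw [tr_cons_same hpr] at hT
    rw [rch_cons_same hpr, if_neg hT.2, Finset.card_eq_zero, Finset.filter_eq_empty_iff]
    rintro u hu (⟨rfl, h⟩ | ⟨rfl, h⟩)
    · exact hT.2 h.1
    · exact hT.2 (hpr.trans h.1)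
  · by_cases hp : Rch E' p v
    · have hr : ¬ Rch E' r v := fun h => hpr (hp.trans h.symm)
      have hrv : r ≠ v := by rintro rfl; exact hpr hp
      rw [if_pos (rch_cons_of hp), Finset.card_eq_one]
      refine ⟨r, ?_⟩
      ext u
      simp only [Finset.mem_filter, Finset.mem_erase, mem_cp, Finset.mem_singleton, hp, hr,
        not_true_eq_false, and_false, not_false_eq_true, and_true, or_false]
      constructor
      · exact fun h => h.2
      · rintro rfl
        exact ⟨⟨hrv, (rch_of_mem (by rw [Sym2.eq_swap]; simp)).trans (rch_cons_of hp)⟩, rfl⟩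
    · by_cases hr : Rch E' r v
      · have hpv : p ≠ v := by rintro rfl; exact hpr hr.symm
        have hpv' : Rch (s(p, r) ::ₘ E') p v :=
          (rch_of_mem (by simp)).trans (rch_cons_of hr)
        rw [if_pos hpv', Finset.card_eq_one]
        refine ⟨p, ?_⟩
        ext u
        simp only [Finset.mem_filter, Finset.mem_erase, mem_cp, Finset.mem_singleton, hp, hr,
          not_true_eq_false, and_false, not_false_eq_true, and_true, false_or]
        constructor
        · exact fun h => h.2
        · rintro rfl
          exact ⟨⟨hpv, hpv'⟩, rfl⟩
      · rw [if_neg (by rw [rch_cons_other hp hr]; exact hp), Finset.card_eq_zero,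
          Finset.filter_eq_empty_iff]
        rintro u hu (⟨rfl, h⟩ | ⟨rfl, h⟩)
        · exact hp h.1
        · exact hr h.1

lemma ms_card_filter {α : Type*} (s : Multiset α) (p : α → Prop) [DecidablePred p] :
    Multiset.card (s.filter p) = (s.map (fun a => if p a then 1 else 0)).sum := by
  induction s using Multiset.induction with
  | empty => simp
  | cons a s ih => by_cases h : p a <;> simp [h, ih, add_comm]

lemma ms_sum_comm {α β M : Type*} [AddCommMonoid M] (A : Finset α) (s : Multiset β) (f : α → β → M) :
    ∑ a ∈ A, (s.map (f a)).sum = (s.map (fun b => ∑ a ∈ A, f a b)).sum := by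
  induction s using Multiset.induction with
  | empty => simp
  | cons b s ih => simp [Finset.sum_add_distrib, ih]

lemma good_card_eq {E : Multiset (Sym2 (Fin n))} {v : Fin n} (hT : Tr E v) :
    ∀ u ∈ (cp E v).erase v,
      Multiset.card (E.filter (fun e => Good (E.erase e) v u e)) = 1 := by
  rw [← Finset.sum_eq_sum_iff_of_le (fun u _ => good_card_le E v u)]
  have h1 : ∑ u ∈ (cp E v).erase v, Multiset.card (E.filter (fun e => Good (E.erase e) v u e))
      = (E.map (fun e => (((cp E v).erase v).filter (fun u => Good (E.erase e) v u e)).card)).sum := by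
    simp only [Finset.card_filter, ms_card_filter]
    exact ms_sum_comm _ _ _
  rw [h1]
  have h2 : E.map (fun e => (((cp E v).erase v).filter (fun u => Good (E.erase e) v u e)).card)
      = E.map (fun e => if ∀ w ∈ e, Rch E w v then 1 else 0) :=
    Multiset.map_congr rfl (fun e he => good_count hT he)
  rw [h2]
  have h3 : (E.map (fun e => if ∀ w ∈ e, Rch E w v then 1 else 0)).sum = ev E v := by
    rw [ev, ms_card_filter]
  rw [h3, Finset.sum_const, smul_eq_mul, mul_one, Finset.card_erase_of_mem (by simpa using Rch.refl E v)]
  have := vv_le_ev E v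
  simp only [Tr, vv] at *
  omega

lemma cc_cons_same {E : Multiset (Sym2 (Fin n))} {x y : Fin n} (h : Rch E x y) :
    cc (s(x, y) ::ₘ E) = cc E := by
  have : (supportGraph (s(x, y) ::ₘ E)).Reachable = (supportGraph E).Reachable := by
    funext u v; exact propext (rch_cons_same h u v)
  simp only [cc, SimpleGraph.ConnectedComponent, this]

lemma cc_cons_diff {E : Multiset (Sym2 (Fin n))} {x y : Fin n} (h : ¬ Rch E x y) :
    cc E = cc (s(x, y) ::ₘ E) + 1 := by
  let G := supportGraph E
  let G' := supportGraph (s(x, y) ::ₘ E)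
  let f : {K : G.ConnectedComponent // K ≠ G.connectedComponentMk y} → G'.ConnectedComponent :=
    fun K => K.1.lift (fun v => G'.connectedComponentMk v) (by
      intro v w p _
      exact SimpleGraph.ConnectedComponent.sound (rch_cons_of (E := E) ⟨p⟩))
  have hf : Function.Bijective f := by
    constructor
    · rintro ⟨K, hK⟩ ⟨K', hK'⟩ hKK
      induction K using SimpleGraph.ConnectedComponent.ind with
      | h v =>
      induction K' using SimpleGraph.ConnectedComponent.ind with
      | h w =>
      have e1 : Rch (s(x, y) ::ₘ E) v w := SimpleGraph.ConnectedComponent.exact hKK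
      have e2 : ¬ Rch E v y := fun h => hK (SimpleGraph.ConnectedComponent.sound h)
      have e3 : ¬ Rch E w y := fun h => hK' (SimpleGraph.ConnectedComponent.sound h)
      rw [rch_cons] at e1
      have : Rch E v w := by
        rcases e1 with e | e | e
        · exact e
        · exact absurd e.2.symm e3
        · exact absurd e.1 e2
      exact Subtype.ext (SimpleGraph.ConnectedComponent.sound this)
    · intro K
      induction K using SimpleGraph.ConnectedComponent.ind with
      | h v =>
      by_cases hv : Rch E v y
      · refine ⟨⟨G.connectedComponentMk x, fun h' => h (SimpleGraph.ConnectedComponent.exact h')⟩, ?_⟩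
        exact SimpleGraph.ConnectedComponent.sound
          ((rch_of_mem (by simp)).trans (rch_cons_of hv.symm))
      · exact ⟨⟨G.connectedComponentMk v, fun h' => hv (SimpleGraph.ConnectedComponent.exact h')⟩, rfl⟩
  rw [cc, cc, ← Nat.card_congr (Equiv.ofBijective f hf)]
  rw [Nat.card_eq_fintype_card, Nat.card_eq_fintype_card, Fintype.card_subtype_compl,
    Fintype.card_subtype_eq]
  have : 0 < Fintype.card G.ConnectedComponent := Fintype.card_pos_iff.mpr ⟨G.connectedComponentMk y⟩
  change Fintype.card G.ConnectedComponent = _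
  omega

lemma cc_zero : cc (0 : Multiset (Sym2 (Fin n))) = n := by
  have hf : Function.Bijective (supportGraph (0 : Multiset (Sym2 (Fin n)))).connectedComponentMk := by
    constructor
    · intro u v h
      have : Rch (0 : Multiset (Sym2 (Fin n))) u v := SimpleGraph.ConnectedComponent.exact h
      exact rch_induct (P := fun z => u = z) rfl (by simp) this
    · intro K
      induction K using SimpleGraph.ConnectedComponent.ind with
      | h v => exact ⟨v, rfl⟩
  rw [cc, ← Nat.card_congr (Equiv.ofBijective _ hf), Nat.card_fin]

end Graph

section Palm
open scoped Classical

variable {n : ℕ}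

def Pn (n i : ℕ) : ℝ := (n : ℝ) ^ (2 * i) / (2 ^ i * (i.factorial : ℝ))

def Ex (n i : ℕ) (Φ : Multiset (Sym2 (Fin n)) → ℝ) : ℝ :=
  (∑ E : Sym (Sym2 (Fin n)) i, (kappa E.1 : ℝ) * Φ E.1) / Pn n i

lemma Pn_nonneg (n i : ℕ) : 0 ≤ Pn n i := by unfold Pn; positivity

lemma kappa_nonneg (E : Multiset (Sym2 (Fin n))) : 0 ≤ (kappa E : ℝ) := by
  have : 0 ≤ kappa E := by unfold kappa; positivity
  exact_mod_cast this

lemma Ex_add (i : ℕ) (Φ Ψ : Multiset (Sym2 (Fin n)) → ℝ) :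
    Ex n i (fun E => Φ E + Ψ E) = Ex n i Φ + Ex n i Ψ := by
  simp only [Ex, mul_add, Finset.sum_add_distrib, add_div]

lemma Ex_sub (i : ℕ) (Φ Ψ : Multiset (Sym2 (Fin n)) → ℝ) :
    Ex n i (fun E => Φ E - Ψ E) = Ex n i Φ - Ex n i Ψ := by
  simp only [Ex, mul_sub, Finset.sum_sub_distrib, sub_div]

lemma Ex_mul (i : ℕ) (a : ℝ) (Φ : Multiset (Sym2 (Fin n)) → ℝ) :
    Ex n i (fun E => a * Φ E) = a * Ex n i Φ := by
  simp only [Ex, mul_left_comm _ a, ← Finset.mul_sum, mul_div_assoc]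

lemma Ex_sum {ι : Type*} (s : Finset ι) (i : ℕ) (Φ : ι → Multiset (Sym2 (Fin n)) → ℝ) :
    Ex n i (fun E => ∑ a ∈ s, Φ a E) = ∑ a ∈ s, Ex n i (Φ a) := by
  simp only [Ex, Finset.mul_sum]
  rw [Finset.sum_comm, Finset.sum_div]

lemma Ex_mono (i : ℕ) {Φ Ψ : Multiset (Sym2 (Fin n)) → ℝ} (h : ∀ E, Φ E ≤ Ψ E) :
    Ex n i Φ ≤ Ex n i Ψ := by
  apply div_le_div_of_nonneg_right _ (Pn_nonneg n i)
  exact Finset.sum_le_sum fun E _ => mul_le_mul_of_nonneg_left (h _) (kappa_nonneg _)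

lemma Ex_nonneg (i : ℕ) {Φ : Multiset (Sym2 (Fin n)) → ℝ} (h : ∀ E, 0 ≤ Φ E) :
    0 ≤ Ex n i Φ :=
  div_nonneg (Finset.sum_nonneg fun E _ => mul_nonneg (kappa_nonneg _) (h _)) (Pn_nonneg n i)

lemma Ex_congr (i : ℕ) {Φ Ψ : Multiset (Sym2 (Fin n)) → ℝ} (h : ∀ E, Multiset.card E = i → Φ E = Ψ E) :
    Ex n i Φ = Ex n i Ψ := by
  unfold Ex
  congr 1
  exact Finset.sum_congr rfl fun E _ => by rw [h _ E.2]

lemma Ex_abs_le (i : ℕ) {Φ Ψ : Multiset (Sym2 (Fin n)) → ℝ} (h : ∀ E, |Φ E| ≤ Ψ E) :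
    |Ex n i Φ| ≤ Ex n i Ψ := by
  rw [abs_le]
  constructor
  · have := Ex_mono (n := n) i (Φ := fun E => (-1) * Ψ E) (Ψ := Φ)
      (fun E => by have := (abs_le.mp (h E)).1; linarith)
    rw [Ex_mul] at this
    linarith
  · exact Ex_mono i fun E => (abs_le.mp (h E)).2

lemma Ex_zero (Φ : Multiset (Sym2 (Fin n)) → ℝ) : Ex n 0 Φ = Φ 0 := by
  have : (Finset.univ : Finset (Sym (Sym2 (Fin n)) 0)) = {Sym.nil} := by
    ext E; simp only [Finset.mem_univ, Finset.mem_singleton, true_iff]; exact Sym.eq_nil_of_card_zero E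
  have h2 : ((Sym.nil : Sym (Sym2 (Fin n)) 0) : Multiset (Sym2 (Fin n))) = 0 := rfl
  rw [Ex, this]
  simp only [Finset.sum_singleton]
  change (kappa (0 : Multiset (Sym2 (Fin n))) : ℝ) * Φ 0 / Pn n 0 = _
  simp [kappa, Pn]

lemma kappa_cons (e : Sym2 (Fin n)) (E : Multiset (Sym2 (Fin n))) :
    kappa (e ::ₘ E) * ((E.count e : ℚ) + 1) = (if e.IsDiag then 1 / 2 else 1) * kappa E := by
  have hfac : ∀ F : Multiset (Sym2 (Fin n)), ∏ e ∈ F.toFinset, ((F.count e).factorial : ℚ)⁻¹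
      = ∏ e : Sym2 (Fin n), ((F.count e).factorial : ℚ)⁻¹ := by
    intro F
    apply Finset.prod_subset (Finset.subset_univ _)
    intro e _ he
    rw [Multiset.mem_toFinset] at he
    simp [Multiset.count_eq_zero_of_notMem he]
  have h1 : (∏ a : Sym2 (Fin n), (((e ::ₘ E).count a).factorial : ℚ)⁻¹) * ((E.count e : ℚ) + 1)
      = ∏ a : Sym2 (Fin n), ((E.count a).factorial : ℚ)⁻¹ := by
    rw [← Finset.mul_prod_erase _ _ (Finset.mem_univ e),
      ← Finset.mul_prod_erase (a := e) Finset.univ (fun a => ((E.count a).factorial : ℚ)⁻¹) (Finset.mem_univ e)]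
    have : ∏ a ∈ Finset.univ.erase e, (((e ::ₘ E).count a).factorial : ℚ)⁻¹
        = ∏ a ∈ Finset.univ.erase e, ((E.count a).factorial : ℚ)⁻¹ := by
      apply Finset.prod_congr rfl
      intro a ha
      rw [Multiset.count_cons_of_ne (Finset.ne_of_mem_erase ha)]
    rw [this, Multiset.count_cons_self, Nat.factorial_succ]
    push_cast
    have : (E.count e : ℚ) + 1 ≠ 0 := by positivity
    have : ((E.count e).factorial : ℚ) ≠ 0 := by positivity
    field_simp
  have h2 : (∏ v : Fin n, ((2 : ℚ) ^ ((e ::ₘ E).count s(v, v)))⁻¹)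
      = (if e.IsDiag then 1 / 2 else 1) * ∏ v : Fin n, ((2 : ℚ) ^ (E.count s(v, v)))⁻¹ := by
    split_ifs with hd
    · obtain ⟨w, rfl⟩ : ∃ w, e = s(w, w) := by
        induction e using Sym2.ind with
        | _ a b => exact ⟨a, by rw [Sym2.mk_isDiag_iff] at hd; rw [hd]⟩
      rw [← Finset.mul_prod_erase _ _ (Finset.mem_univ w),
        ← Finset.mul_prod_erase (a := w) Finset.univ (fun v => ((2 : ℚ) ^ (E.count s(v, v)))⁻¹) (Finset.mem_univ w)]
      have : ∏ v ∈ Finset.univ.erase w, ((2 : ℚ) ^ ((s(w, w) ::ₘ E).count s(v, v)))⁻¹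
          = ∏ v ∈ Finset.univ.erase w, ((2 : ℚ) ^ (E.count s(v, v)))⁻¹ := by
        apply Finset.prod_congr rfl
        intro v hv
        rw [Multiset.count_cons_of_ne]
        intro h
        have := Finset.ne_of_mem_erase hv
        simp at h
        exact this h
      rw [this, Multiset.count_cons_self, pow_succ, mul_inv]
      ring
    · rw [one_mul]
      apply Finset.prod_congr rfl
      intro v _
      rw [Multiset.count_cons_of_ne]
      rintro rfl
      exact hd (by simp)
  rw [kappa, kappa, hfac, hfac, mul_assoc, h1, h2, mul_assoc]

lemma sum_pairs (f : Sym2 (Fin n) → ℝ) :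
    ∑ e : Sym2 (Fin n), (if e.IsDiag then 1 / 2 else 1) * f e
      = (1 / 2) * ∑ x : Fin n, ∑ y : Fin n, f s(x, y) := by
  have h := Finset.sum_fiberwise (s := (Finset.univ : Finset (Fin n × Fin n)))
    (g := fun p => s(p.1, p.2)) (f := fun p => f s(p.1, p.2))
  rw [← Finset.univ_product_univ, Finset.sum_product] at h
  rw [← h, Finset.mul_sum]
  apply Finset.sum_congr rfl
  intro e _
  have h1 : ∑ p ∈ Finset.univ ×ˢ Finset.univ with s(p.1, p.2) = e, f s(p.1, p.2)
      = ((Finset.univ ×ˢ Finset.univ : Finset (Fin n × Fin n)).filter (fun p => s(p.1, p.2) = e)).card * f e := by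
    rw [Finset.sum_congr rfl (g := fun _ => f e), Finset.sum_const, nsmul_eq_mul]
    intro p hp
    rw [(Finset.mem_filter.mp hp).2]
  rw [h1]
  induction e using Sym2.ind with
  | _ a b =>
  have h2 : ((Finset.univ ×ˢ Finset.univ : Finset (Fin n × Fin n)).filter (fun p => s(p.1, p.2) = s(a, b)))
      = {(a, b), (b, a)} := by
    ext ⟨p, r⟩
    simp
  rw [h2]; simp only [Sym2.mk_isDiag_iff]
  split_ifs with hab
  · subst hab; simp
  · rw [Finset.card_pair (by simp; tauto)]; push_cast; ring

lemma palm_raw (i : ℕ) (Φ : Multiset (Sym2 (Fin n)) → Sym2 (Fin n) → ℝ) :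
    ∑ E : Sym (Sym2 (Fin n)) (i + 1), (kappa E.1 : ℝ) * (E.1.map (fun e => Φ (E.1.erase e) e)).sum
      = ∑ E : Sym (Sym2 (Fin n)) i, (kappa E.1 : ℝ) *
          ((1 / 2) * ∑ x : Fin n, ∑ y : Fin n, Φ E.1 s(x, y)) := by
  have h1 : ∀ E : Sym (Sym2 (Fin n)) (i + 1),
      (kappa E.1 : ℝ) * (E.1.map (fun e => Φ (E.1.erase e) e)).sum
      = ∑ e : Sym2 (Fin n), (kappa E.1 : ℝ) * (E.1.count e * Φ (E.1.erase e) e) := by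
    intro E
    rw [Finset.sum_multiset_map_count, Finset.mul_sum]
    simp only [nsmul_eq_mul]
    apply Finset.sum_subset (Finset.subset_univ _)
    intro e _ he
    rw [Multiset.mem_toFinset] at he
    rw [Multiset.count_eq_zero_of_notMem he]; simp
  simp only [h1, ← sum_pairs]
  simp only [Finset.mul_sum]
  rw [Finset.sum_comm, Finset.sum_comm (s := (Finset.univ : Finset (Sym (Sym2 (Fin n)) i)))]
  apply Finset.sum_congr rfl
  intro e _
  symm
  apply Fintype.sum_of_injective (fun E' => e ::ₛ E') (fun _ _ h => (Sym.cons_inj_right e _ _).mp h)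
  · intro E hE
    have : e ∉ E.1 := by
      intro h
      apply hE
      exact ⟨Sym.erase E e h, Sym.cons_erase h⟩
    rw [Multiset.count_eq_zero_of_notMem this]; simp
  · intro E'
    change _ = (kappa (e ::ₘ E'.1) : ℝ) * (((e ::ₘ E'.1).count e : ℕ) * Φ ((e ::ₘ E'.1).erase e) e)
    rw [Multiset.erase_cons_head, Multiset.count_cons_self]
    have := kappa_cons e E'.1
    have h2 : ((kappa (e ::ₘ E'.1) : ℚ) : ℝ) * ((E'.1.count e : ℝ) + 1)
        = (if e.IsDiag then 1 / 2 else 1) * (kappa E'.1 : ℝ) := by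
      have := congrArg (fun q : ℚ => (q : ℝ)) this
      push_cast at this
      rw [this]
      split_ifs <;> simp
    push_cast
    linear_combination (-(Φ E'.1 e)) * h2

lemma palm (hn : 0 < n) (i : ℕ) (Φ : Multiset (Sym2 (Fin n)) → Sym2 (Fin n) → ℝ) :
    Ex n (i + 1) (fun E => (E.map (fun e => Φ (E.erase e) e)).sum)
      = ((i : ℝ) + 1) / n ^ 2 * Ex n i (fun E => ∑ x : Fin n, ∑ y : Fin n, Φ E s(x, y)) := by
  have h1 := palm_raw i Φ
  rw [Ex, h1, Ex]
  have h2 : ∀ E : Sym (Sym2 (Fin n)) i, (kappa E.1 : ℝ) *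
          ((1 / 2) * ∑ x : Fin n, ∑ y : Fin n, Φ E.1 s(x, y))
          = (1 / 2) * ((kappa E.1 : ℝ) * ∑ x : Fin n, ∑ y : Fin n, Φ E.1 s(x, y)) := by
    intro E; ring
  simp only [h2, ← Finset.mul_sum]
  generalize (∑ E : Sym (Sym2 (Fin n)) i, (kappa E.1 : ℝ) * ∑ x : Fin n, ∑ y : Fin n, Φ E.1 s(x, y)) = S
  have hn' : (n : ℝ) ≠ 0 := by positivity
  have hf : (i.factorial : ℝ) ≠ 0 := by positivity
  have hi : (i : ℝ) + 1 ≠ 0 := by positivity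
  simp only [Pn, Nat.factorial_succ]
  push_cast
  rw [mul_add, pow_add]
  field_simp
  ring

/-- one step of the process -/
lemma step (hn : 0 < n) (i : ℕ) (Ψ : Multiset (Sym2 (Fin n)) → ℝ) :
    Ex n (i + 1) Ψ = 1 / n ^ 2 * Ex n i (fun E => ∑ x : Fin n, ∑ y : Fin n, Ψ (s(x, y) ::ₘ E)) := by
  have h := palm hn i (fun E e => Ψ (e ::ₘ E))
  have h2 : Ex n (i + 1) (fun E => (E.map (fun e => Ψ (e ::ₘ E.erase e))).sum)
      = ((i : ℝ) + 1) * Ex n (i + 1) Ψ := by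
    rw [← Ex_mul]
    apply Ex_congr
    intro E hE
    rw [Multiset.map_congr rfl (g := fun _ => Ψ E)]
    · simp [hE]; ring
    · intro e he
      rw [Multiset.cons_erase he]
  rw [h2] at h
  have hi : (i : ℝ) + 1 ≠ 0 := by positivity
  apply mul_left_cancel₀ hi
  rw [h]; ring

/-- indicator of no complex component -/
def inc (E : Multiset (Sym2 (Fin n))) : ℝ := if Nc E then 1 else 0
/-- indicator of tree component -/
def itr (E : Multiset (Sym2 (Fin n))) (v : Fin n) : ℝ := if Tr E v then 1 else 0
/-- indicator of not reachable -/
def inr (E : Multiset (Sym2 (Fin n))) (v u : Fin n) : ℝ := if Rch E u v then 0 else 1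

lemma inc_nonneg (E : Multiset (Sym2 (Fin n))) : 0 ≤ inc E := by unfold inc; split_ifs <;> norm_num
lemma itr_nonneg (E : Multiset (Sym2 (Fin n))) (v : Fin n) : 0 ≤ itr E v := by
  unfold itr; split_ifs <;> norm_num
lemma inr_nonneg (E : Multiset (Sym2 (Fin n))) (v u : Fin n) : 0 ≤ inr E v u := by
  unfold inr; split_ifs <;> norm_num
lemma inc_le_one (E : Multiset (Sym2 (Fin n))) : inc E ≤ 1 := by unfold inc; split_ifs <;> norm_num
lemma itr_le_one (E : Multiset (Sym2 (Fin n))) (v : Fin n) : itr E v ≤ 1 := by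
  unfold itr; split_ifs <;> norm_num
lemma inr_le_one (E : Multiset (Sym2 (Fin n))) (v u : Fin n) : inr E v u ≤ 1 := by
  unfold inr; split_ifs <;> norm_num

lemma tree_sum {E : Multiset (Sym2 (Fin n))} {v : Fin n} (hT : Tr E v) (F : Fin n → ℝ) :
    ∑ u ∈ (cp E v).erase v, F u
      = (E.map (fun e => ∑ u ∈ Finset.univ, if Good (E.erase e) v u e then F u else 0)).sum := by
  rw [← ms_sum_comm]
  have h : ∀ u, (E.map (fun e => if Good (E.erase e) v u e then F u else 0)).sum
      = Multiset.card (E.filter (fun e => Good (E.erase e) v u e)) * F u := by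
    intro u
    rw [ms_card_filter]
    push_cast
    rw [← Multiset.sum_map_mul_right]
    congr 1
    rw [Multiset.map_map]
    apply Multiset.map_congr rfl
    intro e _
    by_cases h : Good (E.erase e) v u e <;> simp [h]
  simp only [h]
  rw [← Finset.sum_subset (Finset.subset_univ ((cp E v).erase v))]
  · apply Finset.sum_congr rfl
    intro u hu
    rw [good_card_eq hT u hu]; simp
  · intro u _ hu
    rw [Multiset.card_eq_zero.mpr, Nat.cast_zero, zero_mul]
    rw [Multiset.filter_eq_nil]
    rintro e he ⟨x, rfl, h1, h2⟩
    apply hu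
    rw [Finset.mem_erase, mem_cp]
    refine ⟨?_, ?_⟩
    · rintro rfl; exact h2 (Rch.refl _ _)
    · have : Rch E x u := rch_of_mem he
      exact this.symm.trans (rch_mono (fun _ h => Multiset.mem_of_mem_erase h) h1)

lemma good_sum (E : Multiset (Sym2 (Fin n))) (v : Fin n) (F : Sym2 (Fin n) → Fin n → ℝ) :
    ∑ x : Fin n, ∑ y : Fin n, (∑ u, if Good E v u s(x, y) then F s(x, y) u else 0)
      = 2 * ∑ x ∈ cp E v, ∑ u, inr E v u * F s(x, u) u := by
  have h : ∀ x y, (∑ u, if Good E v u s(x, y) then F s(x, y) u else 0)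
      = (if Rch E x v then inr E v y * F s(x, y) y else 0)
        + (if Rch E y v then inr E v x * F s(y, x) x else 0) := by
    intro x y
    simp only [good_mk, inr]
    by_cases hx : Rch E x v <;> by_cases hy : Rch E y v <;> simp [hx, hy, Sym2.eq_swap (a := y)]
  simp only [h, Finset.sum_add_distrib]
  have e1 : ∑ x : Fin n, ∑ y : Fin n, (if Rch E x v then inr E v y * F s(x, y) y else 0)
      = ∑ x ∈ cp E v, ∑ u, inr E v u * F s(x, u) u := by
    rw [cp, Finset.sum_filter]
    apply Finset.sum_congr rfl
    intro x _
    split_ifs <;> simp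
  have e2 : ∑ x : Fin n, ∑ y : Fin n, (if Rch E y v then inr E v x * F s(y, x) x else 0)
      = ∑ x ∈ cp E v, ∑ u, inr E v u * F s(x, u) u := by
    rw [Finset.sum_comm, e1]
  rw [e1, e2]; ring

/-- The bridge identity. -/
lemma bridge (hn : 0 < n) (i : ℕ) (G : Multiset (Sym2 (Fin n)) → Fin n → Fin n → ℝ) :
    Ex n (i + 1) (fun E => inc E * ∑ v, itr E v * ∑ u ∈ (cp E v).erase v, G E v u)
      = 2 * ((i : ℝ) + 1) / n ^ 2 * Ex n i (fun E => inc E * ∑ v, itr E v *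
          ∑ x ∈ cp E v, ∑ u, inr E v u * itr E u * G (s(x, u) ::ₘ E) v u) := by
  have h1 : ∀ E : Multiset (Sym2 (Fin n)), inc E * ∑ v, itr E v * ∑ u ∈ (cp E v).erase v, G E v u
      = (E.map (fun e => ∑ v, ∑ u, if Good (E.erase e) v u e then
          inc (e ::ₘ E.erase e) * itr (e ::ₘ E.erase e) v * G (e ::ₘ E.erase e) v u else 0)).sum := by
    intro E
    have : ∀ v, itr E v * ∑ u ∈ (cp E v).erase v, G E v u =
      itr E v * (E.map (fun e => ∑ u ∈ Finset.univ, if Good (E.erase e) v u e then G E v u else 0)).sum := by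
      intro v
      by_cases hT : Tr E v
      · rw [tree_sum hT]
      · simp [itr, hT]
    simp only [this, ← Multiset.sum_map_mul_left]
    rw [ms_sum_comm, ← Multiset.sum_map_mul_left]
    congr 1
    apply Multiset.map_congr rfl
    intro e he
    rw [Multiset.cons_erase he, Finset.mul_sum]
    apply Finset.sum_congr rfl
    intro v _
    rw [Finset.mul_sum, Finset.mul_sum]
    apply Finset.sum_congr rfl
    intro u _
    split_ifs <;> ring
  simp only [h1]
  rw [palm hn i (fun E e => ∑ v, ∑ u, if Good E v u e then
          inc (e ::ₘ E) * itr (e ::ₘ E) v * G (e ::ₘ E) v u else 0)]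
  rw [show 2 * ((i : ℝ) + 1) / n ^ 2 = ((i : ℝ) + 1) / n ^ 2 * 2 by ring, mul_assoc, ← Ex_mul i 2]
  congr 2
  funext E
  have h2 : ∑ x : Fin n, ∑ y : Fin n, ∑ v, ∑ u, (if Good E v u s(x, y) then
          inc (s(x, y) ::ₘ E) * itr (s(x, y) ::ₘ E) v * G (s(x, y) ::ₘ E) v u else 0)
      = ∑ v, ∑ x : Fin n, ∑ y : Fin n, ∑ u, (if Good E v u s(x, y) then
          inc (s(x, y) ::ₘ E) * itr (s(x, y) ::ₘ E) v * G (s(x, y) ::ₘ E) v u else 0) := by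
    rw [Finset.sum_comm]
    rw [Finset.sum_comm (s := (Finset.univ : Finset (Fin n))) (t := (Finset.univ : Finset (Fin n)))
      (f := fun v x => ∑ y : Fin n, ∑ u, (if Good E v u s(x, y) then
          inc (s(x, y) ::ₘ E) * itr (s(x, y) ::ₘ E) v * G (s(x, y) ::ₘ E) v u else 0))]
    rw [Finset.sum_comm]
    apply Finset.sum_congr rfl
    intro x _
    rw [Finset.sum_comm]
  rw [h2, Finset.mul_sum, Finset.mul_sum]
  apply Finset.sum_congr rfl
  intro v _
  rw [good_sum E v (fun e u => inc (e ::ₘ E) * itr (e ::ₘ E) v * G (e ::ₘ E) v u)]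
  congr 1
  rw [← mul_assoc, Finset.mul_sum]
  apply Finset.sum_congr rfl
  intro x hx
  rw [Finset.mul_sum]
  apply Finset.sum_congr rfl
  intro u _
  rw [mem_cp] at hx
  by_cases hu : Rch E u v
  · simp [inr, hu]
  · have hxu : ¬ Rch E x u := fun h => hu (h.symm.trans hx)
    have e1 : inc (s(x, u) ::ₘ E) * itr (s(x, u) ::ₘ E) v = inc E * itr E v * itr E u := by
      simp only [inc, itr, nc_cons_diff hxu, tr_cons_diff hxu hx, tr_congr hx]
      by_cases a : Nc E <;> by_cases b : Tr E v <;> by_cases c : Tr E u <;> simp [a, b, c]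
    rw [e1]; ring

end Palm

section Wt
open scoped Classical

variable {n q : ℕ}

/-- Abstract weight system: everything the probabilistic part needs. -/
structure WS (n : ℕ) (ι : Type) [Fintype ι] (W K σ : ℝ) (lam : ι → ℝ)
    (w : Multiset (Sym2 (Fin n)) → ℝ)
    (Q : ι → Multiset (Sym2 (Fin n)) → Fin n → Fin n → ℝ) : Prop where
  zero : w 0 = 1
  nonneg : ∀ E, 0 ≤ w E
  diff : ∀ E x y, ¬ Rch E x y → w (s(x, y) ::ₘ E) = w E
  same_le : ∀ E x y, Rch E x y → w (s(x, y) ::ₘ E) ≤ W * w E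
  same : ∀ E x y, Rch E x y → w (s(x, y) ::ₘ E) = σ * ∑ i, lam i * Q i E x y
  diag : ∀ i E v, Q i E v v = w E
  ext : ∀ i E x u v, Rch E x v → ¬ Rch E u v → Q i (s(x, u) ::ₘ E) v u = lam i * Q i E v x
  abs_le : ∀ i E u v, |Q i E u v| ≤ K * w E

def wprod (R : Matrix (Fin q) (Fin q) ℝ) (E : Multiset (Sym2 (Fin n))) (c : Fin n → Fin q) : ℝ :=
  (E.map (fun e => R (c e.inf) (c e.sup))).prod

lemma wprod_cons {R : Matrix (Fin q) (Fin q) ℝ} (hs : R.IsSymm) (x y : Fin n)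
    (E : Multiset (Sym2 (Fin n))) (c : Fin n → Fin q) :
    wprod R (s(x, y) ::ₘ E) c = R (c x) (c y) * wprod R E c := by
  rw [wprod, Multiset.map_cons, Multiset.prod_cons, wprod]
  congr 1
  rw [Sym2.inf_mk, Sym2.sup_mk]
  rcases le_total x y with h | h
  · rw [inf_eq_left.mpr h, sup_eq_right.mpr h]
  · rw [inf_eq_right.mpr h, sup_eq_left.mpr h, hs.apply]

lemma wprod_nonneg {R : Matrix (Fin q) (Fin q) ℝ} (h0 : ∀ i j, 0 ≤ R i j)
    (E : Multiset (Sym2 (Fin n))) (c : Fin n → Fin q) : 0 ≤ wprod R E c := by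
  apply Multiset.prod_nonneg
  intro a ha
  obtain ⟨e, _, rfl⟩ := Multiset.mem_map.mp ha
  exact h0 _ _

/-- apply a permutation on the component of u -/
def cperm (E : Multiset (Sym2 (Fin n))) (u : Fin n) (π : Equiv.Perm (Fin q)) :
    (Fin n → Fin q) ≃ (Fin n → Fin q) :=
  Equiv.piCongrRight (fun v => if Rch E v u then π else 1)

lemma cperm_in {E : Multiset (Sym2 (Fin n))} {u v : Fin n} (π : Equiv.Perm (Fin q)) (c : Fin n → Fin q)
    (h : Rch E v u) : cperm E u π c v = π (c v) := by simp [cperm, h]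

lemma cperm_out {E : Multiset (Sym2 (Fin n))} {u v : Fin n} (π : Equiv.Perm (Fin q)) (c : Fin n → Fin q)
    (h : ¬ Rch E v u) : cperm E u π c v = c v := by simp [cperm, h]

lemma wprod_cperm {R : Matrix (Fin q) (Fin q) ℝ} {π : Equiv.Perm (Fin q)}
    (hπ : ∀ a b, R (π a) (π b) = R a b) (E : Multiset (Sym2 (Fin n))) (u : Fin n) (c : Fin n → Fin q) :
    wprod R E (cperm E u π c) = wprod R E c := by
  unfold wprod
  congr 1
  apply Multiset.map_congr rfl
  intro e he
  induction e using Sym2.ind with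
  | _ a b =>
    have hab : ∀ p r : Fin n, Rch E p r → R (cperm E u π c p) (cperm E u π c r) = R (c p) (c r) := by
      intro p r h
      by_cases hp : Rch E p u
      · have hr : Rch E r u := h.symm.trans hp
        rw [cperm_in π c hp, cperm_in π c hr, hπ]
      · have hr : ¬ Rch E r u := fun h' => hp (h.trans h')
        rw [cperm_out π c hp, cperm_out π c hr]
    have h := rch_of_mem he
    rw [Sym2.inf_mk, Sym2.sup_mk]
    rcases le_total a b with h' | h'
    · rw [inf_eq_left.mpr h', sup_eq_right.mpr h']; exact hab _ _ h
    · rw [inf_eq_right.mpr h', sup_eq_left.mpr h']; exact hab _ _ h.symm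

lemma lemU {R : Matrix (Fin q) (Fin q) ℝ} (hR : IsVertexTransitive R) (E : Multiset (Sym2 (Fin n)))
    (u : Fin n) (K : (Fin n → Fin q) → Fin q → ℝ)
    (hK : ∀ c c' b, (∀ v, ¬ Rch E v u → c v = c' v) → K c b = K c' b) :
    (q : ℝ) * ∑ c, K c (c u) * wprod R E c = ∑ c, (∑ b, K c b) * wprod R E c := by
  have hT : ∀ a b d, ∑ c, (if c u = a then K c d * wprod R E c else 0)
      = ∑ c, (if c u = b then K c d * wprod R E c else 0) := by
    intro a b d
    obtain ⟨π, h1, h2⟩ := hR.2.2 a b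
    apply Fintype.sum_equiv (cperm E u π)
    intro c
    rw [wprod_cperm h2, cperm_in π c (Rch.refl E u),
      hK (cperm E u π c) c d (fun v hv => cperm_out π c hv)]
    have : π (c u) = b ↔ c u = a := by
      rw [← h1]; exact π.injective.eq_iff
    simp only [this]
  have h1 : ∑ c, K c (c u) * wprod R E c
      = ∑ a, ∑ c, (if c u = a then K c a * wprod R E c else 0) := by
    rw [Finset.sum_comm]
    apply Finset.sum_congr rfl
    intro c _
    simp
  have h2 : ∑ c, (∑ b, K c b) * wprod R E c
      = ∑ b, ∑ a, ∑ c, (if c u = a then K c b * wprod R E c else 0) := by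
    simp only [Finset.sum_mul]
    rw [Finset.sum_comm]
    apply Finset.sum_congr rfl
    intro b _
    rw [Finset.sum_comm]
    apply Finset.sum_congr rfl
    intro c _
    simp
  rw [h1, h2, Finset.mul_sum]
  apply Finset.sum_congr rfl
  intro b _
  rw [Finset.sum_congr rfl (fun a _ => hT a b b)]
  simp

def pref (q : ℕ) (σ : ℝ) (E : Multiset (Sym2 (Fin n))) : ℝ :=
  ((q : ℝ) * σ) ^ Multiset.card E * σ ^ cc E / ((q : ℝ) * σ) ^ n

def om (R : Matrix (Fin q) (Fin q) ℝ) (σ : ℝ) (E : Multiset (Sym2 (Fin n))) : ℝ :=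
  pref q σ E * ∑ c, wprod R E c

def Qf (R : Matrix (Fin q) (Fin q) ℝ) (σ : ℝ) (φ : Fin q → ℝ) (E : Multiset (Sym2 (Fin n)))
    (v u : Fin n) : ℝ :=
  q * (pref q σ E * ∑ c, φ (c v) * φ (c u) * wprod R E c)

lemma pref_same {σ : ℝ} {E : Multiset (Sym2 (Fin n))} {x y : Fin n} (h : Rch E x y) :
    pref q σ (s(x, y) ::ₘ E) = q * σ * pref q σ E := by
  rw [pref, pref, cc_cons_same h, Multiset.card_cons]; ring

lemma pref_diff {σ : ℝ} (hσ : 0 < σ) {E : Multiset (Sym2 (Fin n))} {x y : Fin n} (h : ¬ Rch E x y) :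
    pref q σ (s(x, y) ::ₘ E) = q * pref q σ E := by
  rw [pref, pref, cc_cons_diff h, Multiset.card_cons]; ring

lemma pref_nonneg {σ : ℝ} (hσ : 0 < σ) (E : Multiset (Sym2 (Fin n))) : 0 ≤ pref q σ E := by
  unfold pref; positivity

theorem ws_of {R : Matrix (Fin q) (Fin q) ℝ} (hR : IsVertexTransitive R) (hq : 0 < q)
    (hrow : ∀ i, ∑ j, R i j = 1) {σ : ℝ} (hσ : 0 < σ) {ι : Type} [Fintype ι] (lam : ι → ℝ)
    (φ : ι → Fin q → ℝ) (hunit : ∀ i, ∑ a, φ i a ^ 2 = 1)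
    (heig : ∀ i a, ∑ b, R a b * φ i b = lam i * φ i a)
    (hspec : ∀ a b, R a b = ∑ i, lam i * (φ i a * φ i b)) (n : ℕ) :
    WS n ι (q * σ) q σ lam (om R σ) (fun i => Qf R σ (φ i)) := by
  have hq' : (q : ℝ) ≠ 0 := by positivity
  have hle1 : ∀ a b, R a b ≤ 1 := by
    intro a b
    rw [← hrow a]
    exact Finset.single_le_sum (f := fun j => R a j) (fun j _ => hR.2.1 a j) (Finset.mem_univ b)
  have hφ1 : ∀ i a, |φ i a| ≤ 1 := by
    intro i a
    rw [← sq_le_one_iff_abs_le_one, ← hunit i]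
    exact Finset.single_le_sum (f := fun j => φ i j ^ 2) (fun j _ => sq_nonneg _) (Finset.mem_univ a)
  refine ⟨?_, ?_, ?_, ?_, ?_, ?_, ?_, ?_⟩
  · have h1 : ((q : ℝ) * σ) ^ n ≠ 0 := by positivity
    simp only [om, pref, cc_zero, wprod]
    simp
    rw [mul_pow]
    field_simp
  · intro E
    exact mul_nonneg (pref_nonneg hσ E) (Finset.sum_nonneg fun c _ => wprod_nonneg hR.2.1 E c)
  · intro E x y h
    have h' := lemU hR E y (fun c b => R (c x) b) (fun c c' b hc => by rw [hc x h])
    simp only [hrow, one_mul] at h'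
    rw [om, om, pref_diff hσ h]
    simp only [wprod_cons hR.1]
    rw [← h']; ring
  · intro E x y h
    rw [om, om, pref_same h, mul_assoc (q * σ : ℝ)]
    apply mul_le_mul_of_nonneg_left _ (by positivity)
    apply mul_le_mul_of_nonneg_left _ (pref_nonneg hσ E)
    apply Finset.sum_le_sum
    intro c _
    rw [wprod_cons hR.1]
    exact mul_le_of_le_one_left (wprod_nonneg hR.2.1 E c) (hle1 _ _)
  · intro E x y h
    rw [om, pref_same h]
    simp only [wprod_cons hR.1, Qf]
    have : ∑ c, R (c x) (c y) * wprod R E c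
        = ∑ i, lam i * ∑ c, φ i (c x) * φ i (c y) * wprod R E c := by
      simp only [Finset.mul_sum]
      rw [Finset.sum_comm]
      apply Finset.sum_congr rfl
      intro c _
      rw [hspec, Finset.sum_mul]
      apply Finset.sum_congr rfl
      intro i _
      ring
    rw [this, Finset.mul_sum, Finset.mul_sum]
    apply Finset.sum_congr rfl
    intro i _
    ring
  · intro i E v
    have h' := lemU hR E v (fun c b => φ i b * φ i b) (fun c c' b hc => rfl)
    have h2 : ∑ b, φ i b * φ i b = 1 := by rw [← hunit i]; simp only [sq]
    simp only [h2, one_mul] at h'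
    rw [Qf, om, ← h']; ring
  · intro i E x u v hx hu
    have hxu : ¬ Rch E x u := fun h => hu (h.symm.trans hx)
    have hvu : ¬ Rch E v u := fun h => hu h.symm
    have h' := lemU hR E u (fun c b => φ i (c v) * φ i b * R (c x) b)
      (fun c c' b hc => by rw [hc x hxu, hc v hvu])
    have h2 : ∀ c : Fin n → Fin q, ∑ b, φ i (c v) * φ i b * R (c x) b = lam i * (φ i (c v) * φ i (c x)) := by
      intro c
      have := heig i (c x)
      rw [mul_left_comm, ← this, Finset.mul_sum]
      apply Finset.sum_congr rfl
      intro b _; ring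
    simp only [h2] at h'
    rw [Qf, Qf, pref_diff hσ hxu]
    simp only [wprod_cons hR.1]
    have h3 : ∑ c, φ i (c v) * φ i (c u) * (R (c x) (c u) * wprod R E c)
        = ∑ c, φ i (c v) * φ i (c u) * R (c x) (c u) * wprod R E c := by
      apply Finset.sum_congr rfl; intro c _; ring
    have h4 : ∑ c, lam i * (φ i (c v) * φ i (c x)) * wprod R E c
        = lam i * ∑ c, φ i (c v) * φ i (c x) * wprod R E c := by
      rw [Finset.mul_sum]; apply Finset.sum_congr rfl; intro c _; ring
    rw [h3]
    rw [h4] at h'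
    linear_combination (q * pref q σ E) * h'
  · intro i E u v
    rw [Qf, om, abs_mul, abs_mul, abs_of_nonneg (pref_nonneg hσ E), Nat.abs_cast]
    apply mul_le_mul_of_nonneg_left _ (by positivity)
    apply mul_le_mul_of_nonneg_left _ (pref_nonneg hσ E)
    refine (Finset.abs_sum_le_sum_abs _ _).trans (Finset.sum_le_sum fun c _ => ?_)
    rw [abs_mul, abs_of_nonneg (wprod_nonneg hR.2.1 E c), abs_mul]
    apply mul_le_of_le_one_left (wprod_nonneg hR.2.1 E c)
    exact mul_le_one₀ (hφ1 _ _) (abs_nonneg _) (hφ1 _ _)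

/-- relation of `g0` with the normalised expectation -/
lemma g0_eq (R : Matrix (Fin q) (Fin q) ℝ) {σ : ℝ} (hσ : 0 < σ) (hq : 0 < q) {n m : ℕ} (hn : 0 < n)
    (hm : m ≤ n) :
    g0 R σ n m = ((q : ℝ) * σ) ^ (n - m) * Pn n m * Ex n m (fun E => inc E * om R σ E) := by
  have hP : Pn n m ≠ 0 := by unfold Pn; positivity
  rw [Ex, mul_assoc, mul_div_cancel₀ _ hP, g0, Finset.mul_sum]
  apply Finset.sum_congr rfl
  intro E _
  have h1 : ((q : ℝ) * σ) ^ n = ((q : ℝ) * σ) ^ (n - m) * ((q : ℝ) * σ) ^ m := by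
    rw [← pow_add]; congr 1; omega
  have hx : ((q : ℝ) * σ) ^ (n - m) ≠ 0 := by positivity
  have hy : ((q : ℝ) * σ) ^ m ≠ 0 := by positivity
  have hc : Multiset.card E.1 = m := E.2
  simp only [noComplex_iff, inc]
  split_ifs with hN
  · rw [om, pref, h1, hc]
    have : ∀ c, weight R σ E.1 c = (kappa E.1 : ℝ) * σ ^ cc E.1 * wprod R E.1 c := by
      intro c
      rw [weight, wprod, Finset.prod_multiset_map_count]
    simp only [this, ← Finset.mul_sum]
    field_simp
  · simp

end Wt

section Mom
open scoped Classical

variable {n : ℕ}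

/-- size of the component as a real -/
def sz (E : Multiset (Sym2 (Fin n))) (v : Fin n) : ℝ := vv E v

lemma sz_nonneg (E : Multiset (Sym2 (Fin n))) (v : Fin n) : 0 ≤ sz E v := Nat.cast_nonneg _

def TT (n i : ℕ) (F : Multiset (Sym2 (Fin n)) → Fin n → ℝ) : ℝ :=
  Ex n i (fun E => inc E * ∑ v, itr E v * F E v)

lemma TT_mono (i : ℕ) {F G : Multiset (Sym2 (Fin n)) → Fin n → ℝ}
    (h : ∀ E v, Tr E v → F E v ≤ G E v) : TT n i F ≤ TT n i G := by
  apply Ex_mono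
  intro E
  apply mul_le_mul_of_nonneg_left _ (inc_nonneg E)
  apply Finset.sum_le_sum
  intro v _
  by_cases hv : Tr E v
  · exact mul_le_mul_of_nonneg_left (h E v hv) (itr_nonneg _ _)
  · simp [itr, hv]

lemma TT_nonneg (i : ℕ) {F : Multiset (Sym2 (Fin n)) → Fin n → ℝ}
    (h : ∀ E v, 0 ≤ F E v) : 0 ≤ TT n i F :=
  Ex_nonneg i fun E => mul_nonneg (inc_nonneg E)
    (Finset.sum_nonneg fun v _ => mul_nonneg (itr_nonneg _ _) (h E v))

lemma TT_add (i : ℕ) (F G : Multiset (Sym2 (Fin n)) → Fin n → ℝ) :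
    TT n i (fun E v => F E v + G E v) = TT n i F + TT n i G := by
  simp only [TT, mul_add, Finset.sum_add_distrib, Ex_add]

lemma TT_mul (i : ℕ) (a : ℝ) (F : Multiset (Sym2 (Fin n)) → Fin n → ℝ) :
    TT n i (fun E v => a * F E v) = a * TT n i F := by
  rw [TT, TT, ← Ex_mul]
  congr 1; funext E
  rw [Finset.mul_sum, Finset.mul_sum, Finset.mul_sum]
  apply Finset.sum_congr rfl; intro v _; ring

lemma sum_inr_itr_le (E : Multiset (Sym2 (Fin n))) (v : Fin n) :
    ∑ u, inr E v u * itr E u ≤ n := by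
  calc ∑ u, inr E v u * itr E u ≤ ∑ _u : Fin n, (1 : ℝ) :=
        Finset.sum_le_sum fun u _ => mul_le_one₀ (inr_le_one _ _ _) (itr_nonneg _ _) (itr_le_one _ _)
    _ = n := by simp

lemma cp_zero (v : Fin n) : cp (0 : Multiset (Sym2 (Fin n))) v = {v} := by
  have h : cc (0 : Multiset (Sym2 (Fin n))) = n := cc_zero
  ext u
  rw [mem_cp, Finset.mem_singleton]
  constructor
  · intro h
    exact (rch_induct (P := fun w => w = u) rfl (fun a b hab _ => by simp at hab) h).symm
  · rintro rfl; exact Rch.refl _ _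

/-- splitting off the root -/
lemma bridge' (hn : 0 < n) (i : ℕ) (G : Multiset (Sym2 (Fin n)) → Fin n → Fin n → ℝ) :
    TT n (i + 1) (fun E v => ∑ u ∈ cp E v, G E v u)
      = TT n (i + 1) (fun E v => G E v v) + 2 * ((i : ℝ) + 1) / n ^ 2 * TT n i (fun E v =>
          ∑ x ∈ cp E v, ∑ u, inr E v u * itr E u * G (s(x, u) ::ₘ E) v u) := by
  rw [TT, TT, TT, ← bridge hn i G, ← Ex_add]
  congr 1; funext E
  rw [← mul_add, ← Finset.sum_add_distrib]
  congr 1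
  apply Finset.sum_congr rfl; intro v _
  rw [← mul_add, Finset.add_sum_erase]
  rw [mem_cp]; exact Rch.refl _ _

/-- the key recursive estimate -/
lemma key (hn : 0 < n) {β : ℝ} (hβ0 : 0 ≤ β) (hβ : β < 1) {M : ℕ} (hM : 2 * (M : ℝ) ≤ β * n)
    (F : Multiset (Sym2 (Fin n)) → Fin n → ℝ) (D : Multiset (Sym2 (Fin n)) → Fin n → Fin n → ℝ)
    (hF0 : ∀ E v, 0 ≤ F E v) (hD0 : ∀ E v u, 0 ≤ D E v u)
    (hF : ∀ E x u v, Rch E x v → ¬ Rch E u v → Tr E v → Tr E u →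
      F (s(x, u) ::ₘ E) v ≤ F E v + D E v u)
    {c1 c2 : ℝ} (h1 : ∀ i ≤ M, TT n i F ≤ c1)
    (h2 : ∀ i ≤ M, TT n i (fun E v => sz E v * ∑ u, inr E v u * itr E u * D E v u) ≤ n * c2) :
    ∀ i ≤ M, TT n i (fun E v => sz E v * F E v) ≤ (c1 + c2) * (1 / (1 - β)) := by
  have hn' : (0 : ℝ) < n := by exact_mod_cast hn
  have hc2 : 0 ≤ c2 := by
    have := (TT_nonneg 0 (F := fun E v => sz E v * ∑ u, inr E v u * itr E u * D E v u)
      (fun E v => mul_nonneg (sz_nonneg _ _) (Finset.sum_nonneg fun u _ =>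
        mul_nonneg (mul_nonneg (inr_nonneg _ _ _) (itr_nonneg _ _)) (hD0 _ _ _)))).trans (h2 0 (Nat.zero_le _))
    exact nonneg_of_mul_nonneg_right this hn'
  have hc1 : 0 ≤ c1 := (TT_nonneg 0 hF0).trans (h1 0 (Nat.zero_le _))
  have hb : 0 < 1 - β := by linarith
  have hss : ∀ E v, sz E v * F E v = ∑ u ∈ cp E v, F E v := by
    intro E v; simp [sz, vv]
  intro i
  induction i with
  | zero =>
    intro _
    have h0 := h1 0 (Nat.zero_le _)
    have : TT n 0 (fun E v => sz E v * F E v) = TT n 0 F := by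
      simp only [TT, Ex_zero]
      simp [sz, vv, cp_zero]
    rw [this]
    refine h0.trans ?_
    rw [mul_one_div, le_div_iff₀ hb]
    nlinarith
  | succ i ih =>
    intro hi
    have ih := ih (by omega)
    have hi' : 2 * ((i : ℝ) + 1) ≤ β * n := by
      have : ((i + 1 : ℕ) : ℝ) ≤ M := by exact_mod_cast hi
      push_cast at this
      linarith
    have e1 := bridge' hn i (fun E v u => F E v)
    simp only [← hss] at e1
    have e2 : TT n i (fun E v => ∑ x ∈ cp E v, ∑ u, inr E v u * itr E u * F (s(x, u) ::ₘ E) v)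
        ≤ TT n i (fun E v => n * (sz E v * F E v) + sz E v * ∑ u, inr E v u * itr E u * D E v u) := by
      apply TT_mono
      intro E v hv
      calc ∑ x ∈ cp E v, ∑ u, inr E v u * itr E u * F (s(x, u) ::ₘ E) v
          ≤ ∑ x ∈ cp E v, ∑ u, inr E v u * itr E u * (F E v + D E v u) := by
            apply Finset.sum_le_sum
            intro x hx
            rw [mem_cp] at hx
            apply Finset.sum_le_sum
            intro u _
            by_cases hu : Rch E u v
            · simp [inr, hu]
            by_cases ht : Tr E u
            · apply mul_le_mul_of_nonneg_left (hF E x u v hx hu hv ht)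
              exact mul_nonneg (inr_nonneg _ _ _) (itr_nonneg _ _)
            · simp [itr, ht]
        _ = (∑ u, inr E v u * itr E u) * (sz E v * F E v)
            + sz E v * ∑ u, inr E v u * itr E u * D E v u := by
            rw [Finset.sum_const, nsmul_eq_mul]
            simp only [mul_add, Finset.sum_add_distrib, ← Finset.sum_mul]
            change sz E v * _ + sz E v * _ = _
            ring
        _ ≤ _ := by
            gcongr
            · exact mul_nonneg (sz_nonneg _ _) (hF0 _ _)
            · exact sum_inr_itr_le E v
    rw [TT_add, TT_mul] at e2
    rw [e1]
    have h3 := h1 (i + 1) hi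
    have h4 := h2 i (by omega)
    have e3 : 2 * ((i : ℝ) + 1) / n ^ 2 ≤ β / n := by
      rw [div_le_div_iff₀ (by positivity) hn']
      nlinarith
    have e4 : TT n i (fun E v => ∑ x ∈ cp E v, ∑ u, inr E v u * itr E u * F (s(x, u) ::ₘ E) v)
        ≤ n * ((c1 + c2) * (1 / (1 - β)) + c2) := by
      have := mul_le_mul_of_nonneg_left ih hn'.le
      linarith
    have e5 : 0 ≤ (c1 + c2) * (1 / (1 - β)) + c2 := by positivity
    have e6 : 2 * ((i : ℝ) + 1) / n ^ 2 * TT n i (fun E v => ∑ x ∈ cp E v, ∑ u, inr E v u * itr E u * F (s(x, u) ::ₘ E) v)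
        ≤ β / n * (n * ((c1 + c2) * (1 / (1 - β)) + c2)) := by
      calc _ ≤ 2 * ((i : ℝ) + 1) / n ^ 2 * (n * ((c1 + c2) * (1 / (1 - β)) + c2)) := by
            gcongr
        _ ≤ _ := by gcongr
    have e7 : β / n * (n * ((c1 + c2) * (1 / (1 - β)) + c2)) = β * ((c1 + c2) * (1 / (1 - β)) + c2) := by
      field_simp
    have e8 : (c1 + c2) * (1 / (1 - β)) = c1 + c2 + β * ((c1 + c2) * (1 / (1 - β))) := by
      field_simp; ring
    nlinarith

end Mom

section Mom2
open scoped Classical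

variable {n : ℕ}

lemma inr_comm (E : Multiset (Sym2 (Fin n))) (u v : Fin n) : inr E u v = inr E v u := by
  simp only [inr, rch_comm]

lemma TT_lift (i : ℕ) (G : Multiset (Sym2 (Fin n)) → Fin n → ℝ) (hG : ∀ E v, 0 ≤ G E v) :
    TT n i (fun E v => ∑ w, inr E v w * itr E w * G E w) ≤ n * TT n i G := by
  rw [TT, TT, ← Ex_mul]
  apply Ex_mono
  intro E
  rw [mul_left_comm]
  apply mul_le_mul_of_nonneg_left _ (inc_nonneg E)
  calc ∑ v, itr E v * ∑ w, inr E v w * itr E w * G E w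
      ≤ ∑ _v : Fin n, ∑ w, itr E w * G E w := by
        apply Finset.sum_le_sum
        intro v _
        have h1 : ∑ w, inr E v w * itr E w * G E w ≤ ∑ w, itr E w * G E w := by
          apply Finset.sum_le_sum
          intro w _
          rw [mul_assoc]
          exact mul_le_of_le_one_left (mul_nonneg (itr_nonneg _ _) (hG _ _)) (inr_le_one _ _ _)
        refine le_trans (mul_le_of_le_one_left ?_ (itr_le_one _ _)) h1
        exact Finset.sum_nonneg fun w _ =>
          mul_nonneg (mul_nonneg (inr_nonneg _ _ _) (itr_nonneg _ _)) (hG _ _)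
    _ = _ := by simp

lemma TT_swap (i : ℕ) (a b : Multiset (Sym2 (Fin n)) → Fin n → ℝ) :
    TT n i (fun E v => a E v * ∑ u, inr E v u * itr E u * b E u)
      = TT n i (fun E v => b E v * ∑ u, inr E v u * itr E u * a E u) := by
  rw [TT, TT]
  congr 1; funext E
  congr 1
  simp only [Finset.mul_sum]
  rw [Finset.sum_comm]
  apply Finset.sum_congr rfl; intro v _
  apply Finset.sum_congr rfl; intro u _
  rw [inr_comm]; ring

lemma dec {E : Multiset (Sym2 (Fin n))} {x u v : Fin n} (hx : Rch E x v) (hu : ¬ Rch E u v)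
    (G' H : Fin n → ℝ) (hG : ∀ w, ¬ Rch E w v → ¬ Rch E w u → G' w ≤ H w) :
    ∑ w, inr (s(x, u) ::ₘ E) v w * itr (s(x, u) ::ₘ E) w * G' w
      ≤ ∑ w, inr E v w * itr E w * (inr E u w * H w) := by
  apply Finset.sum_le_sum
  intro w _
  by_cases h1 : Rch E w v
  · have : Rch (s(x, u) ::ₘ E) w v := rch_cons_of h1
    simp [inr, h1, this]
  by_cases h2 : Rch E w u
  · have : Rch (s(x, u) ::ₘ E) w v := by
      refine (rch_cons_of h2).trans ((Rch.symm (rch_of_mem (Multiset.mem_cons_self _ _))).trans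
        (rch_cons_of hx))
    simp [inr, h2, this]
  have hxw : ¬ Rch E x w := fun h => h1 (h.symm.trans hx)
  have huw : ¬ Rch E u w := fun h => h2 h.symm
  have e1 : inr (s(x, u) ::ₘ E) v w = inr E v w := by
    rw [inr_comm, inr, rch_cons_other hxw huw, ← inr, inr_comm]
  have e2 : itr (s(x, u) ::ₘ E) w = itr E w := by
    rw [itr, tr_cons_other hxw huw, ← itr]
  have e3 : inr E u w = 1 := by simp [inr, h2]
  rw [e1, e2, e3, one_mul]
  exact mul_le_mul_of_nonneg_left (hG w h1 h2) (mul_nonneg (inr_nonneg _ _ _) (itr_nonneg _ _))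

lemma drop_inr {E : Multiset (Sym2 (Fin n))} (u v : Fin n) (H : Fin n → ℝ) (hH : ∀ w, 0 ≤ H w) :
    ∑ w, inr E v w * itr E w * (inr E u w * H w) ≤ ∑ w, inr E v w * itr E w * H w := by
  apply Finset.sum_le_sum
  intro w _
  apply mul_le_mul_of_nonneg_left _ (mul_nonneg (inr_nonneg _ _ _) (itr_nonneg _ _))
  exact mul_le_of_le_one_left (hH w) (inr_le_one _ _ _)

lemma sum_ii_nonneg {E : Multiset (Sym2 (Fin n))} (v : Fin n) (H : Fin n → ℝ) (hH : ∀ w, 0 ≤ H w) :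
    0 ≤ ∑ w, inr E v w * itr E w * H w :=
  Finset.sum_nonneg fun w _ => mul_nonneg (mul_nonneg (inr_nonneg _ _ _) (itr_nonneg _ _)) (hH w)

lemma sz_other {E : Multiset (Sym2 (Fin n))} {x u v w : Fin n} (hx : Rch E x v)
    (h1 : ¬ Rch E w v) (h2 : ¬ Rch E w u) : sz (s(x, u) ::ₘ E) w = sz E w := by
  have hxw : ¬ Rch E x w := fun h => h1 (h.symm.trans hx)
  have huw : ¬ Rch E u w := fun h => h2 h.symm
  rw [sz, vv_cons_other hxw huw, sz]

lemma sz_merge {E : Multiset (Sym2 (Fin n))} {x u v : Fin n} (hx : Rch E x v)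
    (hu : ¬ Rch E u v) : sz (s(x, u) ::ₘ E) v = sz E v + sz E u := by
  have hxu : ¬ Rch E x u := fun h => hu (h.symm.trans hx)
  rw [sz, vv_cons_diff hxu hx, vv_congr hx]; push_cast; rfl

/-- tree-merge invariant density -/
structure Inv (ρ : Multiset (Sym2 (Fin n)) → ℝ) : Prop where
  nonneg : ∀ E, 0 ≤ ρ E
  merge : ∀ E x y, ¬ Rch E x y → Tr E x → Tr E y → ρ (s(x, y) ::ₘ E) = ρ E

lemma Inv.m {ρ : Multiset (Sym2 (Fin n)) → ℝ} (h : Inv ρ) {E : Multiset (Sym2 (Fin n))} {x u v : Fin n}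
    (hx : Rch E x v) (hu : ¬ Rch E u v) (hv : Tr E v) (ht : Tr E u) : ρ (s(x, u) ::ₘ E) = ρ E :=
  h.merge E x u (fun h => hu (h.symm.trans hx)) ((tr_congr hx).mpr hv) ht


lemma mA1 (hn : 0 < n) {β : ℝ} (hβ0 : 0 ≤ β) (hβ : β < 1) {M : ℕ} (hM : 2 * (M : ℝ) ≤ β * n)
    {ρ : Multiset (Sym2 (Fin n)) → ℝ} (hρ : Inv ρ) {B : ℝ} (hB : ∀ i ≤ M, Ex n i (fun E => inc E * ρ E) ≤ B)
    : ∀ i ≤ M, TT n i (fun E v => sz E v * ρ E) ≤ n * B * (1 / (1 - β)) := by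
  have := key hn hβ0 hβ hM (fun E _ => ρ E) (fun _ _ _ => 0) (fun E _ => hρ.nonneg E)
    (fun _ _ _ => le_rfl) (fun E x u v hx hu hv ht => by rw [hρ.m hx hu hv ht, add_zero])
    (c1 := n * B) (c2 := 0) ?_ ?_
  · simpa using this
  · intro i hi
    refine le_trans ?_ (mul_le_mul_of_nonneg_left (hB i hi) (Nat.cast_nonneg n))
    rw [TT, ← Ex_mul]
    apply Ex_mono
    intro E
    rw [mul_left_comm]
    apply mul_le_mul_of_nonneg_left _ (inc_nonneg E)
    rw [← Finset.sum_mul]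
    apply mul_le_mul_of_nonneg_right _ (hρ.nonneg E)
    calc ∑ v, itr E v ≤ ∑ _v : Fin n, (1 : ℝ) := Finset.sum_le_sum fun v _ => itr_le_one _ _
      _ = n := by simp
  · intro i _
    simp [TT, Ex]

lemma mA2 (hn : 0 < n) {β : ℝ} (hβ0 : 0 ≤ β) (hβ : β < 1) {M : ℕ} (hM : 2 * (M : ℝ) ≤ β * n)
    {ρ : Multiset (Sym2 (Fin n)) → ℝ} (hρ : Inv ρ) {B : ℝ} (hB : ∀ i ≤ M, Ex n i (fun E => inc E * ρ E) ≤ B)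
    : ∀ i ≤ M, TT n i (fun E v => sz E v * ∑ w, inr E v w * itr E w * (sz E w * ρ E))
    ≤ n ^ 2 * B * (1 / (1 - β)) ^ 2 := by
  have h0 : ∀ (E : Multiset (Sym2 (Fin n))) w, 0 ≤ sz E w * ρ E := fun E w => mul_nonneg (sz_nonneg _ _) (hρ.nonneg _)
  have := key hn hβ0 hβ hM (fun E v => ∑ w, inr E v w * itr E w * (sz E w * ρ E)) (fun _ _ _ => 0)
    (fun E v => sum_ii_nonneg v _ (h0 E)) (fun _ _ _ => le_rfl) ?_
    (c1 := n ^ 2 * B * (1 / (1 - β))) (c2 := 0) ?_ ?_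
  · intro i hi
    refine (this i hi).trans (le_of_eq (by ring))
  · intro E x u v hx hu hv ht
    rw [add_zero]
    refine le_trans (dec hx hu _ (fun w => sz E w * ρ E) ?_) (drop_inr _ _ _ (h0 E))
    intro w h1 h2
    rw [sz_other hx h1 h2, hρ.m hx hu hv ht]
  · intro i hi
    refine (TT_lift i (fun E w => sz E w * ρ E) h0).trans ?_
    refine (mul_le_mul_of_nonneg_left (mA1 hn hβ0 hβ hM hρ hB i hi) (Nat.cast_nonneg n)).trans
      (le_of_eq (by ring))
  · intro i _
    simp [TT, Ex]

lemma mA3 (hn : 0 < n) {β : ℝ} (hβ0 : 0 ≤ β) (hβ : β < 1) {M : ℕ} (hM : 2 * (M : ℝ) ≤ β * n)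
    {ρ : Multiset (Sym2 (Fin n)) → ℝ} (hρ : Inv ρ) {B : ℝ} (hB : ∀ i ≤ M, Ex n i (fun E => inc E * ρ E) ≤ B)
    : ∀ i ≤ M, TT n i (fun E v => sz E v * ∑ w, inr E v w * itr E w *
      (sz E w * ∑ z, inr E v z * itr E z * (inr E w z * (sz E z * ρ E))))
    ≤ n ^ 3 * B * (1 / (1 - β)) ^ 3 := by
  have h0 : ∀ (E : Multiset (Sym2 (Fin n))) w, 0 ≤ sz E w * ρ E := fun E w => mul_nonneg (sz_nonneg _ _) (hρ.nonneg _)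
  have h1 : ∀ (E : Multiset (Sym2 (Fin n))) v w,
      0 ≤ sz E w * ∑ z, inr E v z * itr E z * (inr E w z * (sz E z * ρ E)) :=
    fun E v w => mul_nonneg (sz_nonneg _ _) (sum_ii_nonneg v _ fun z => mul_nonneg (inr_nonneg _ _ _) (h0 E z))
  have := key hn hβ0 hβ hM (fun E v => ∑ w, inr E v w * itr E w *
      (sz E w * ∑ z, inr E v z * itr E z * (inr E w z * (sz E z * ρ E)))) (fun _ _ _ => 0)
    (fun E v => sum_ii_nonneg v _ (h1 E v)) (fun _ _ _ => le_rfl) ?_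
    (c1 := n ^ 3 * B * (1 / (1 - β)) ^ 2) (c2 := 0) ?_ ?_
  · intro i hi
    refine (this i hi).trans (le_of_eq (by ring))
  · intro E x u v hx hu hv ht
    rw [add_zero]
    refine le_trans (dec hx hu _ (fun w => sz E w * ∑ z, inr E v z * itr E z * (inr E w z * (sz E z * ρ E))) ?_)
      (drop_inr _ _ _ (h1 E v))
    intro w h1 h2
    rw [sz_other hx h1 h2]
    apply mul_le_mul_of_nonneg_left _ (sz_nonneg _ _)
    refine le_trans (dec hx hu _ (fun z => inr E w z * (sz E z * ρ E)) ?_)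
      (drop_inr _ _ _ (fun z => mul_nonneg (inr_nonneg _ _ _) (h0 E z)))
    intro z h3 h4
    have hxw : ¬ Rch E x w := fun h => h1 (h.symm.trans hx)
    have huw : ¬ Rch E u w := fun h => h2 h.symm
    rw [sz_other hx h3 h4, hρ.m hx hu hv ht, inr, rch_cons_other hxw huw, ← inr]
  · intro i hi
    have e1 : TT n i (fun E v => ∑ w, inr E v w * itr E w *
      (sz E w * ∑ z, inr E v z * itr E z * (inr E w z * (sz E z * ρ E))))
      ≤ TT n i (fun E v => ∑ w, inr E v w * itr E w *
      (sz E w * ∑ z, inr E w z * itr E z * ((sz E z * ρ E)))) := by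
      apply TT_mono
      intro E v _
      apply Finset.sum_le_sum
      intro w _
      apply mul_le_mul_of_nonneg_left _ (mul_nonneg (inr_nonneg _ _ _) (itr_nonneg _ _))
      apply mul_le_mul_of_nonneg_left _ (sz_nonneg _ _)
      refine le_trans (le_of_eq ?_) (drop_inr v w _ (h0 E))
      apply Finset.sum_congr rfl
      intro z _; ring
    refine e1.trans ((TT_lift i (fun E w => sz E w * ∑ z, inr E w z * itr E z * ((sz E z * ρ E)))
      (fun E w => mul_nonneg (sz_nonneg _ _) (sum_ii_nonneg w _ (h0 E)))).trans ?_)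
    refine (mul_le_mul_of_nonneg_left (mA2 hn hβ0 hβ hM hρ hB i hi) (Nat.cast_nonneg n)).trans
      (le_of_eq (by ring))
  · intro i _
    simp [TT, Ex]

lemma mB0 (hn : 0 < n) {β : ℝ} (hβ0 : 0 ≤ β) (hβ : β < 1) {M : ℕ} (hM : 2 * (M : ℝ) ≤ β * n)
    {ρ : Multiset (Sym2 (Fin n)) → ℝ} (hρ : Inv ρ) {B : ℝ} (hB : ∀ i ≤ M, Ex n i (fun E => inc E * ρ E) ≤ B)
    : 0 ≤ B := (Ex_nonneg 0 fun E => mul_nonneg (inc_nonneg E) (hρ.nonneg E)).trans (hB 0 (Nat.zero_le _))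

lemma mc1 {β : ℝ} (hβ0 : 0 ≤ β) (hβ : β < 1) : 1 ≤ 1 / (1 - β) := by
  rw [le_div_iff₀ (by linarith)]; linarith

lemma mB2 (hn : 0 < n) {β : ℝ} (hβ0 : 0 ≤ β) (hβ : β < 1) {M : ℕ} (hM : 2 * (M : ℝ) ≤ β * n)
    {ρ : Multiset (Sym2 (Fin n)) → ℝ} (hρ : Inv ρ) {B : ℝ} (hB : ∀ i ≤ M, Ex n i (fun E => inc E * ρ E) ≤ B)
    : ∀ i ≤ M, TT n i (fun E v => sz E v * (sz E v * ρ E)) ≤ 2 * n * B * (1 / (1 - β)) ^ 3 := by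
  have hB0 := mB0 hn hβ0 hβ hM hρ hB
  have hc := mc1 hβ0 hβ
  have h0 : ∀ (E : Multiset (Sym2 (Fin n))) w, 0 ≤ sz E w * ρ E := fun E w => mul_nonneg (sz_nonneg _ _) (hρ.nonneg _)
  have := key hn hβ0 hβ hM (fun E v => sz E v * ρ E) (fun E _ u => sz E u * ρ E)
    h0 (fun E _ u => h0 E u) ?_
    (c1 := n * B * (1 / (1 - β))) (c2 := n * B * (1 / (1 - β)) ^ 2) ?_ ?_
  · intro i hi
    refine (this i hi).trans ?_
    generalize 1 / (1 - β) = c at *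
    have h1 : 0 ≤ n * B := by positivity
    have h2 : c ^ 2 ≤ c ^ 3 := pow_le_pow_right₀ hc (by norm_num)
    nlinarith
  · intro E x u v hx hu hv ht
    rw [sz_merge hx hu, hρ.m hx hu hv ht, add_mul]
  · exact mA1 hn hβ0 hβ hM hρ hB
  · intro i hi
    exact (mA2 hn hβ0 hβ hM hρ hB i hi).trans (le_of_eq (by ring))

lemma mB21 (hn : 0 < n) {β : ℝ} (hβ0 : 0 ≤ β) (hβ : β < 1) {M : ℕ} (hM : 2 * (M : ℝ) ≤ β * n)
    {ρ : Multiset (Sym2 (Fin n)) → ℝ} (hρ : Inv ρ) {B : ℝ} (hB : ∀ i ≤ M, Ex n i (fun E => inc E * ρ E) ≤ B)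
    : ∀ i ≤ M, TT n i (fun E v => sz E v * (sz E v * ∑ w, inr E v w * itr E w * (sz E w * ρ E)))
    ≤ 2 * n ^ 2 * B * (1 / (1 - β)) ^ 4 := by
  have hB0 := mB0 hn hβ0 hβ hM hρ hB
  have hc := mc1 hβ0 hβ
  have h0 : ∀ (E : Multiset (Sym2 (Fin n))) w, 0 ≤ sz E w * ρ E := fun E w => mul_nonneg (sz_nonneg _ _) (hρ.nonneg _)
  have := key hn hβ0 hβ hM (fun E v => sz E v * ∑ w, inr E v w * itr E w * (sz E w * ρ E))
    (fun E v u => sz E u * ∑ w, inr E v w * itr E w * (inr E u w * (sz E w * ρ E)))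
    (fun E v => mul_nonneg (sz_nonneg _ _) (sum_ii_nonneg v _ (h0 E)))
    (fun E v u => mul_nonneg (sz_nonneg _ _) (sum_ii_nonneg v _ fun z => mul_nonneg (inr_nonneg _ _ _) (h0 E z))) ?_
    (c1 := n ^ 2 * B * (1 / (1 - β)) ^ 2) (c2 := n ^ 2 * B * (1 / (1 - β)) ^ 3) ?_ ?_
  · intro i hi
    refine (this i hi).trans ?_
    generalize 1 / (1 - β) = c at *
    have h1 : 0 ≤ n ^ 2 * B := by positivity
    have h2 : c ^ 3 ≤ c ^ 4 := pow_le_pow_right₀ hc (by norm_num)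
    nlinarith
  · intro E x u v hx hu hv ht
    rw [sz_merge hx hu, add_mul]
    have e1 : ∑ w, inr (s(x, u) ::ₘ E) v w * itr (s(x, u) ::ₘ E) w * (sz (s(x, u) ::ₘ E) w * ρ (s(x, u) ::ₘ E))
      ≤ ∑ w, inr E v w * itr E w * (inr E u w * (sz E w * ρ E)) := by
      refine dec hx hu _ (fun w => sz E w * ρ E) ?_
      intro w h1 h2
      rw [sz_other hx h1 h2, hρ.m hx hu hv ht]
    apply add_le_add
    · exact mul_le_mul_of_nonneg_left (e1.trans (drop_inr _ _ _ (h0 E))) (sz_nonneg _ _)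
    · exact mul_le_mul_of_nonneg_left e1 (sz_nonneg _ _)
  · exact mA2 hn hβ0 hβ hM hρ hB
  · intro i hi
    exact (mA3 hn hβ0 hβ hM hρ hB i hi).trans (le_of_eq (by ring))

lemma mB3 (hn : 0 < n) {β : ℝ} (hβ0 : 0 ≤ β) (hβ : β < 1) {M : ℕ} (hM : 2 * (M : ℝ) ≤ β * n)
    {ρ : Multiset (Sym2 (Fin n)) → ℝ} (hρ : Inv ρ) {B : ℝ} (hB : ∀ i ≤ M, Ex n i (fun E => inc E * ρ E) ≤ B)
    : ∀ i ≤ M, TT n i (fun E v => sz E v * (sz E v ^ 2 * ρ E)) ≤ 8 * n * B * (1 / (1 - β)) ^ 5 := by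
  have hB0 := mB0 hn hβ0 hβ hM hρ hB
  have hc := mc1 hβ0 hβ
  have := key hn hβ0 hβ hM (fun E v => sz E v ^ 2 * ρ E)
    (fun E v u => (2 * sz E v * sz E u + sz E u ^ 2) * ρ E)
    (fun E v => mul_nonneg (sq_nonneg _) (hρ.nonneg _))
    (fun E v u => mul_nonneg (by have := sz_nonneg E v; have := sz_nonneg E u; positivity) (hρ.nonneg _)) ?_
    (c1 := 2 * n * B * (1 / (1 - β)) ^ 3) (c2 := 6 * n * B * (1 / (1 - β)) ^ 4) ?_ ?_
  · intro i hi
    refine (this i hi).trans ?_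
    generalize 1 / (1 - β) = c at *
    have h1 : 0 ≤ n * B := by positivity
    have h2 : c ^ 4 ≤ c ^ 5 := pow_le_pow_right₀ hc (by norm_num)
    nlinarith
  · intro E x u v hx hu hv ht
    rw [sz_merge hx hu, hρ.m hx hu hv ht]
    exact le_of_eq (by ring)
  · intro i hi
    refine le_trans (le_of_eq ?_) (mB2 hn hβ0 hβ hM hρ hB i hi)
    congr 1; funext E v; ring
  · intro i hi
    have h21 := mB21 hn hβ0 hβ hM hρ hB i hi
    have e1 : TT n i (fun E v => sz E v * ∑ u, inr E v u * itr E u * ((2 * sz E v * sz E u + sz E u ^ 2) * ρ E))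
      = 2 * TT n i (fun E v => sz E v * (sz E v * ∑ w, inr E v w * itr E w * (sz E w * ρ E)))
        + TT n i (fun E v => sz E v * ∑ u, inr E v u * itr E u * (sz E u ^ 2 * ρ E)) := by
      rw [← TT_mul, ← TT_add]
      congr 1; funext E v
      simp only [Finset.mul_sum, ← Finset.sum_add_distrib]
      apply Finset.sum_congr rfl; intro u _; ring
    have e2 : TT n i (fun E v => sz E v * ∑ u, inr E v u * itr E u * (sz E u ^ 2 * ρ E))
      = TT n i (fun E v => sz E v * (sz E v * ∑ w, inr E v w * itr E w * (sz E w * ρ E))) := by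
      rw [TT_swap i sz (fun E u => sz E u ^ 2 * ρ E)]
      congr 1; funext E v
      simp only [Finset.mul_sum]
      apply Finset.sum_congr rfl; intro u _; ring
    rw [e1, e2]
    nlinarith

end Mom2

section Proc
open scoped Classical

variable {n : ℕ}

/-- number of vertices in non-tree components -/
def NN (E : Multiset (Sym2 (Fin n))) : ℝ := ∑ v, (1 - itr E v)

lemma NN_nonneg (E : Multiset (Sym2 (Fin n))) : 0 ≤ NN E :=
  Finset.sum_nonneg fun v _ => by have := itr_le_one E v; linarith

variable {ι : Type} [Fintype ι] {W K σ : ℝ} {lam : ι → ℝ}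
    {w : Multiset (Sym2 (Fin n)) → ℝ}
    {Q : ι → Multiset (Sym2 (Fin n)) → Fin n → Fin n → ℝ}

lemma expand (ws : WS n ι W K σ lam w Q) (E : Multiset (Sym2 (Fin n))) :
    ∑ x, ∑ y, inc (s(x, y) ::ₘ E) * w (s(x, y) ::ₘ E)
      = n ^ 2 * (inc E * w E) + inc E * (∑ x, itr E x * ∑ y ∈ cp E x, (w (s(x, y) ::ₘ E) - w E))
        - inc E * (NN E ^ 2 * w E) := by
  have hp : ∀ x y, inc (s(x, y) ::ₘ E) * w (s(x, y) ::ₘ E)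
      = inc E * w E + inc E * (itr E x * (if Rch E y x then w (s(x, y) ::ₘ E) - w E else 0))
        - inc E * w E * ((1 - itr E x) * (1 - itr E y)) := by
    intro x y
    by_cases h : Rch E x y
    · have h' := h.symm
      simp only [inc, itr, nc_cons_same h, h', if_true, ← tr_congr h]
      by_cases a : Nc E <;> by_cases b : Tr E x <;> simp [a, b]
    · have h' : ¬ Rch E y x := fun h' => h h'.symm
      simp only [inc, itr, nc_cons_diff h, h', if_false, ws.diff E x y h]
      by_cases a : Nc E <;> by_cases b : Tr E x <;> by_cases c : Tr E y <;> simp [a, b, c]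
  simp only [hp]
  simp_rw [Finset.sum_sub_distrib, Finset.sum_add_distrib]
  simp only [← Finset.mul_sum]
  have e1 : ∀ x, ∑ y, (if Rch E y x then w (s(x, y) ::ₘ E) - w E else 0)
      = ∑ y ∈ cp E x, (w (s(x, y) ::ₘ E) - w E) := by
    intro x
    rw [cp, Finset.sum_filter]
  simp only [e1]
  have e2 : ∑ x, (1 - itr E x) * ∑ y, (1 - itr E y) = NN E ^ 2 := by
    rw [← Finset.sum_mul, sq]; rfl
  simp only [Finset.sum_sub_distrib] at e2 ⊢
  rw [e2]
  simp only [Finset.sum_const, Finset.card_univ, Fintype.card_fin, nsmul_eq_mul]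
  ring

/-- partition function -/
def hh (n : ℕ) (w : Multiset (Sym2 (Fin n)) → ℝ) (i : ℕ) : ℝ := Ex n i (fun E => inc E * w E)

lemma process (hn : 0 < n) (ws : WS n ι W K σ lam w Q) (i : ℕ) :
    hh n w (i + 1) = hh n w i + 1 / n ^ 2 * TT n i (fun E x => ∑ y ∈ cp E x, (w (s(x, y) ::ₘ E) - w E))
      - 1 / n ^ 2 * Ex n i (fun E => inc E * (NN E ^ 2 * w E)) := by
  have hn' : (n : ℝ) ≠ 0 := by positivity
  rw [hh, step hn i]
  simp only [expand ws]
  rw [Ex_sub, Ex_add, Ex_mul, ← hh, ← TT]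
  field_simp

lemma inv_w (ws : WS n ι W K σ lam w Q) : Inv w :=
  ⟨ws.nonneg, fun E x y h _ _ => ws.diff E x y h⟩

lemma inv_wN (ws : WS n ι W K σ lam w Q) : Inv (fun E => w E * NN E) := by
  refine ⟨fun E => mul_nonneg (ws.nonneg E) (NN_nonneg E), fun E x y h hx hy => ?_⟩
  rw [ws.diff E x y h]
  congr 1
  unfold NN
  apply Finset.sum_congr rfl
  intro v _
  congr 1
  simp only [itr]
  congr 1
  apply propext
  by_cases h1 : Rch E x v
  · rw [tr_cons_diff h h1, ← tr_congr h1]; tauto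
  by_cases h2 : Rch E y v
  · rw [tr_cons_diff' h h2, ← tr_congr h2]; tauto
  exact tr_cons_other h1 h2

lemma hh_step_le (hn : 0 < n) (ws : WS n ι W K σ lam w Q) (i : ℕ) :
    hh n w (i + 1) ≤ hh n w i + W / n ^ 2 * TT n i (fun E v => sz E v * w E) := by
  rw [process hn ws]
  have h1 : 0 ≤ Ex n i (fun E => inc E * (NN E ^ 2 * w E)) := Ex_nonneg _ fun E =>
    mul_nonneg (inc_nonneg E) (mul_nonneg (sq_nonneg _) (ws.nonneg E))
  have h2 : TT n i (fun E x => ∑ y ∈ cp E x, (w (s(x, y) ::ₘ E) - w E))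
      ≤ W * TT n i (fun E v => sz E v * w E) := by
    rw [← TT_mul]
    apply TT_mono
    intro E v _
    calc ∑ y ∈ cp E v, (w (s(v, y) ::ₘ E) - w E) ≤ ∑ y ∈ cp E v, W * w E := by
          apply Finset.sum_le_sum
          intro y hy
          rw [mem_cp] at hy
          have := ws.same_le E v y hy.symm
          have := ws.nonneg E
          linarith
      _ = _ := by
          rw [Finset.sum_const, nsmul_eq_mul]; simp only [sz, vv]; ring
  have h3 : (0 : ℝ) ≤ 1 / n ^ 2 := by positivity
  have h4 := mul_le_mul_of_nonneg_left h2 h3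
  have h5 := mul_nonneg h3 h1
  have : W / (n : ℝ) ^ 2 * TT n i (fun E v => sz E v * w E) =
     1 / n ^ 2 * (W * TT n i (fun E v => sz E v * w E)) := by ring
  linarith


lemma hh_pow (hn : 0 < n) {β : ℝ} (hβ0 : 0 ≤ β) (hβ : β < 1) (hW : 0 ≤ W) (ws : WS n ι W K σ lam w Q)
    : ∀ M : ℕ, 2 * (M : ℝ) ≤ β * n → hh n w M ≤ (1 + W * (1 / (1 - β)) / n) ^ M := by
  have hc : 0 ≤ 1 / (1 - β) := by have := mc1 hβ0 hβ; linarith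
  have hx : 0 ≤ W * (1 / (1 - β)) / n := by positivity
  have hn' : (n : ℝ) ≠ 0 := by positivity
  intro M
  induction M using Nat.strong_induction_on with
  | _ M ih =>
  cases M with
  | zero =>
    intro _
    rw [hh, Ex_zero, ws.zero]; simp [inc_le_one]
  | succ M =>
    intro hM
    push_cast at hM
    have hM' : 2 * (M : ℝ) ≤ β * n := by linarith
    have hB : ∀ i ≤ M, Ex n i (fun E => inc E * w E) ≤ (1 + W * (1 / (1 - β)) / n) ^ M := by
      intro i hi
      have : (i : ℝ) ≤ M := by exact_mod_cast hi
      refine (ih i (by omega) (by linarith)).trans ?_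
      exact pow_le_pow_right₀ (by linarith) hi
    have h1 := mA1 hn hβ0 hβ hM' (inv_w ws) hB M le_rfl
    have h2 := hh_step_le hn ws M
    have h3 := hB M le_rfl
    have h4 : W / n ^ 2 * TT n M (fun E v => sz E v * w E)
        ≤ W / n ^ 2 * (n * (1 + W * (1 / (1 - β)) / n) ^ M * (1 / (1 - β))) :=
      mul_le_mul_of_nonneg_left h1 (by positivity)
    have h5 : W / n ^ 2 * (n * (1 + W * (1 / (1 - β)) / n) ^ M * (1 / (1 - β)))
        = (W * (1 / (1 - β)) / n) * (1 + W * (1 / (1 - β)) / n) ^ M := by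
      field_simp
    rw [← hh] at h3
    rw [pow_succ]
    linarith

lemma hh_le (hn : 0 < n) {β : ℝ} (hβ0 : 0 ≤ β) (hβ : β < 1) (hW : 0 ≤ W) (ws : WS n ι W K σ lam w Q)
    : ∀ i : ℕ, 2 * (i : ℝ) ≤ β * n → hh n w i ≤ Real.exp (W * (1 / (1 - β))) := by
  intro i hi
  have hc : 0 ≤ 1 / (1 - β) := by have := mc1 hβ0 hβ; linarith
  have hn' : (0 : ℝ) < n := by positivity
  have hx : 0 ≤ W * (1 / (1 - β)) / n := by positivity
  refine (hh_pow hn hβ0 hβ hW ws i hi).trans ?_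
  calc (1 + W * (1 / (1 - β)) / n) ^ i ≤ (Real.exp (W * (1 / (1 - β)) / n)) ^ i := by
        apply pow_le_pow_left₀ (by linarith)
        have := Real.add_one_le_exp (W * (1 / (1 - β)) / n)
        linarith
    _ = Real.exp (i * (W * (1 / (1 - β)) / n)) := by rw [← Real.exp_nat_mul]
    _ ≤ _ := by
        apply Real.exp_le_exp.mpr
        have : (i : ℝ) ≤ n := by nlinarith
        calc (i : ℝ) * (W * (1 / (1 - β)) / n) ≤ n * (W * (1 / (1 - β)) / n) := by gcongr
          _ = _ := by field_simp

/-- removal of a cycle edge -/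
lemma cycle_rm (hn : 0 < n) (ws : WS n ι W K σ lam w Q)
    (i : ℕ) (f : Multiset (Sym2 (Fin n)) → ℝ) (f' : Multiset (Sym2 (Fin n)) → Fin n → ℝ)
    (hf0 : ∀ E, 0 ≤ f E)
    (hf : ∀ E x y v, Rch E x y → Rch E x v → Tr E v → f (s(x, y) ::ₘ E) ≤ f' E v) :
    Ex n (i + 1) (fun E => inc E * (w E * (NN E * f E)))
      ≤ W * (((i : ℝ) + 1) / n ^ 2) * TT n i (fun E v => sz E v * (sz E v * (w E * f' E v))) := by
  set Φ : Multiset (Sym2 (Fin n)) → Sym2 (Fin n) → ℝ := fun E' e =>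
    ∑ v, if ∃ x y, e = s(x, y) ∧ Rch E' x y ∧ Rch E' x v then
      inc (e ::ₘ E') * (w (e ::ₘ E') * f (e ::ₘ E')) else 0 with hΦ
  have h0 : ∀ E : Multiset (Sym2 (Fin n)), 0 ≤ inc E * (w E * f E) := fun E =>
    mul_nonneg (inc_nonneg E) (mul_nonneg (ws.nonneg E) (hf0 E))
  have h1 : Ex n (i + 1) (fun E => inc E * (w E * (NN E * f E)))
      ≤ Ex n (i + 1) (fun E => (E.map (fun e => Φ (E.erase e) e)).sum) := by
    apply Ex_mono
    intro E
    have e1 : inc E * (w E * (NN E * f E)) = ∑ v, (1 - itr E v) * (inc E * (w E * f E)) := by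
      rw [← Finset.sum_mul]
      change _ = NN E * _
      ring
    rw [e1, ← ms_sum_comm]
    apply Finset.sum_le_sum
    intro v _
    have e2 : ∀ e ∈ E, 0 ≤ (if ∃ x y, e = s(x, y) ∧ Rch (E.erase e) x y ∧ Rch (E.erase e) x v then
      inc (e ::ₘ E.erase e) * (w (e ::ₘ E.erase e) * f (e ::ₘ E.erase e)) else 0) := by
      intro e _
      split_ifs
      · exact h0 _
      · exact le_rfl
    by_cases hv : Tr E v
    · simp only [itr, hv, if_true, sub_self, zero_mul]
      apply Multiset.sum_nonneg
      intro a ha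
      obtain ⟨e, he, rfl⟩ := Multiset.mem_map.mp ha
      exact e2 e he
    · simp only [itr, hv, if_false, sub_zero, one_mul]
      obtain ⟨x, y, hxy, h3, h4⟩ := exists_cycle_edge E v hv
      have e3 := Multiset.single_le_sum (s := E.map (fun e => if ∃ x y, e = s(x, y) ∧ Rch (E.erase e) x y ∧ Rch (E.erase e) x v then
      inc (e ::ₘ E.erase e) * (w (e ::ₘ E.erase e) * f (e ::ₘ E.erase e)) else 0)) (by
        intro a ha
        obtain ⟨e, he, rfl⟩ := Multiset.mem_map.mp ha
        exact e2 e he) _ (Multiset.mem_map_of_mem _ hxy)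
      refine le_trans (le_of_eq ?_) e3
      rw [if_pos ⟨x, y, rfl, h3, h4⟩, Multiset.cons_erase hxy]
  refine h1.trans ?_
  rw [palm hn i Φ, mul_comm W, mul_assoc]
  apply mul_le_mul_of_nonneg_left _ (by positivity)
  rw [TT, ← Ex_mul]
  apply Ex_mono
  intro E
  simp only [hΦ]
  have e4 : ∑ x : Fin n, ∑ y : Fin n, ∑ v : Fin n, (if ∃ x' y', s(x, y) = s(x', y') ∧ Rch E x' y' ∧ Rch E x' v then
      inc (s(x, y) ::ₘ E) * (w (s(x, y) ::ₘ E) * f (s(x, y) ::ₘ E)) else 0)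
      = ∑ v : Fin n, ∑ x : Fin n, ∑ y : Fin n, (if ∃ x' y', s(x, y) = s(x', y') ∧ Rch E x' y' ∧ Rch E x' v then
      inc (s(x, y) ::ₘ E) * (w (s(x, y) ::ₘ E) * f (s(x, y) ::ₘ E)) else 0) := by
    conv_rhs => rw [Finset.sum_comm]
    apply Finset.sum_congr rfl
    intro x _
    rw [Finset.sum_comm]
  rw [e4, Finset.mul_sum, Finset.mul_sum]
  apply Finset.sum_le_sum
  intro v _
  have e5 : ∀ x y, (if ∃ x' y', s(x, y) = s(x', y') ∧ Rch E x' y' ∧ Rch E x' v then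
      inc (s(x, y) ::ₘ E) * (w (s(x, y) ::ₘ E) * f (s(x, y) ::ₘ E)) else 0)
      ≤ if Rch E x v then (if Rch E y v then inc E * itr E v * (W * w E * f' E v) else 0) else 0 := by
    intro x y
    by_cases h : ∃ x' y', s(x, y) = s(x', y') ∧ Rch E x' y' ∧ Rch E x' v
    · rw [if_pos h]
      obtain ⟨x', y', hs, h3, h4⟩ := h
      have hxv : Rch E x v ∧ Rch E y v := by
        rcases Sym2.eq_iff.mp hs with ⟨rfl, rfl⟩ | ⟨rfl, rfl⟩
        · exact ⟨h4, h3.symm.trans h4⟩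
        · exact ⟨h3.symm.trans h4, h4⟩
      have hxy : Rch E x y := hxv.1.trans hxv.2.symm
      rw [if_pos hxv.1, if_pos hxv.2]
      have e6 : inc (s(x, y) ::ₘ E) = inc E * itr E v := by
        simp only [inc, itr, nc_cons_same hxy, tr_congr hxv.1]
        by_cases a : Nc E <;> by_cases b : Tr E v <;> simp [a, b]
      rw [e6]
      by_cases hT : Tr E v
      · apply mul_le_mul_of_nonneg_left _ (mul_nonneg (inc_nonneg _) (itr_nonneg _ _))
        apply mul_le_mul (ws.same_le E x y hxy) (hf E x y v hxy hxv.1 hT) (hf0 _)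
        exact (ws.nonneg _).trans (ws.same_le E x y hxy)
      · simp [itr, hT]
    · rw [if_neg h]
      split_ifs with h5 h6
      · exact absurd ⟨x, y, rfl, h5.trans h6.symm, h5⟩ h
      · exact le_rfl
      · exact le_rfl
  calc _ ≤ ∑ x, ∑ y, (if Rch E x v then (if Rch E y v then inc E * itr E v * (W * w E * f' E v) else 0) else 0) :=
        Finset.sum_le_sum fun x _ => Finset.sum_le_sum fun y _ => e5 x y
    _ = ∑ x ∈ cp E v, ∑ y ∈ cp E v, inc E * itr E v * (W * w E * f' E v) := by
        simp only [cp, Finset.sum_filter]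
        apply Finset.sum_congr rfl
        intro x _
        split_ifs <;> simp
    _ = _ := by
        simp only [Finset.sum_const, nsmul_eq_mul, sz, vv]
        ring
    _ ≤ _ := le_rfl

lemma NN_zero : NN (0 : Multiset (Sym2 (Fin n))) = 0 := by
  have : ∀ v, Tr (0 : Multiset (Sym2 (Fin n))) v := by
    intro v
    have := vv_pos (0 : Multiset (Sym2 (Fin n))) v
    simp [Tr, ev, this]
  simp [NN, itr, this]

lemma NN_cycle {E : Multiset (Sym2 (Fin n))} {x y v : Fin n} (h : Rch E x y) (hv : Rch E x v) :
    NN (s(x, y) ::ₘ E) ≤ NN E + sz E v := by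
  have e1 : sz E v = ∑ u, if Rch E u v then (1 : ℝ) else 0 := by
    simp [sz, vv, cp, Finset.sum_boole]
  rw [e1, NN, NN, ← Finset.sum_add_distrib]
  apply Finset.sum_le_sum
  intro u _
  simp only [itr, tr_cons_same h]
  by_cases a : Tr E u
  · by_cases b : Rch E x u
    · have : Rch E u v := b.symm.trans hv
      simp [a, b, this]
    · simp only [a, b, not_false_eq_true, and_self, if_true]
      split_ifs <;> simp
  · simp only [a, false_and, if_false]
    split_ifs <;> simp

end Proc

section Rec
open scoped Classical

variable {n : ℕ}
variable {ι : Type} [Fintype ι] {W K σ : ℝ} {lam : ι → ℝ}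
    {w : Multiset (Sym2 (Fin n)) → ℝ}
    {Q : ι → Multiset (Sym2 (Fin n)) → Fin n → Fin n → ℝ}

def cB (W β : ℝ) : ℝ := Real.exp (W * (1 / (1 - β)))
def cU1 (W β : ℝ) : ℝ := W * cB W β * (1 / (1 - β)) ^ 3
def cU2 (W β : ℝ) : ℝ := W * (cU1 W β * (1 / (1 - β)) ^ 3 + 4 * cB W β * (1 / (1 - β)) ^ 5)

lemma hi_div {β : ℝ} (hβ : β < 1) (hn : 0 < n) {i : ℕ} (hi : 2 * ((i : ℝ) + 1) ≤ β * n) :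
    2 * ((i : ℝ) + 1) / n ^ 2 ≤ 1 / n := by
  have hn' : (0 : ℝ) < n := by exact_mod_cast hn
  rw [div_le_div_iff₀ (by positivity) hn']
  nlinarith


lemma hB_w (hn : 0 < n) {β : ℝ} (hβ0 : 0 ≤ β) (hβ : β < 1) (hW : 0 ≤ W) (ws : WS n ι W K σ lam w Q)
    {M : ℕ} (hM : 2 * (M : ℝ) ≤ β * n)
    : ∀ i ≤ M, Ex n i (fun E => inc E * w E) ≤ cB W β := by
  intro i hi
  have : (i : ℝ) ≤ M := by exact_mod_cast hi
  exact hh_le hn hβ0 hβ hW ws i (by linarith)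

lemma hU1 (hn : 0 < n) {β : ℝ} (hβ0 : 0 ≤ β) (hβ : β < 1) (hW : 0 ≤ W) (ws : WS n ι W K σ lam w Q)
    {M : ℕ} (hM : 2 * (M : ℝ) ≤ β * n)
    : ∀ i ≤ M, Ex n i (fun E => inc E * (w E * NN E)) ≤ cU1 W β := by
  have hc := mc1 hβ0 hβ
  have hc0 : 0 ≤ 1 / (1 - β) := by linarith
  have hB0 : 0 < cB W β := Real.exp_pos _
  have hn' : (0 : ℝ) < n := by exact_mod_cast hn
  intro i hi
  cases i with
  | zero => rw [Ex_zero, NN_zero]; simp only [mul_zero, cU1]; positivity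
  | succ i =>
    have hi' : 2 * ((i : ℝ) + 1) ≤ β * n := by
      have : ((i + 1 : ℕ) : ℝ) ≤ M := by exact_mod_cast hi
      push_cast at this
      linarith
    have h1 := cycle_rm hn ws i (fun _ => 1) (fun _ _ => 1) (fun _ => zero_le_one) (fun _ _ _ _ _ _ _ => le_rfl)
    simp only [mul_one] at h1
    have h2 := mB2 hn hβ0 hβ hM (inv_w ws) (hB_w hn hβ0 hβ hW ws hM) i (by omega)
    have h3 := hi_div hβ hn hi'
    refine h1.trans ?_
    calc W * (((i : ℝ) + 1) / n ^ 2) * TT n i (fun E v => sz E v * (sz E v * w E))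
        ≤ W * (((i : ℝ) + 1) / n ^ 2) * (2 * n * cB W β * (1 / (1 - β)) ^ 3) := by gcongr
      _ = (2 * ((i : ℝ) + 1) / n ^ 2) * n * (W * cB W β * (1 / (1 - β)) ^ 3) := by ring
      _ ≤ 1 / n * n * (W * cB W β * (1 / (1 - β)) ^ 3) := by gcongr
      _ = _ := by rw [cU1]; field_simp

lemma hU2 (hn : 0 < n) {β : ℝ} (hβ0 : 0 ≤ β) (hβ : β < 1) (hW : 0 ≤ W) (ws : WS n ι W K σ lam w Q)
    {M : ℕ} (hM : 2 * (M : ℝ) ≤ β * n)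
    : ∀ i ≤ M, Ex n i (fun E => inc E * (NN E ^ 2 * w E)) ≤ cU2 W β := by
  have hc := mc1 hβ0 hβ
  have hc0 : 0 ≤ 1 / (1 - β) := by linarith
  have hB0 : 0 < cB W β := Real.exp_pos _
  have hU0 : 0 ≤ cU1 W β := by unfold cU1; positivity
  have hn' : (0 : ℝ) < n := by exact_mod_cast hn
  intro i hi
  cases i with
  | zero =>
    rw [Ex_zero, NN_zero]
    have : 0 ≤ cU2 W β := by unfold cU2; positivity
    simpa using this
  | succ i =>
    have hi' : 2 * ((i : ℝ) + 1) ≤ β * n := by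
      have : ((i + 1 : ℕ) : ℝ) ≤ M := by exact_mod_cast hi
      push_cast at this
      linarith
    have h1 := cycle_rm hn ws i NN (fun E v => NN E + sz E v) NN_nonneg
      (fun E x y v h hv _ => NN_cycle h hv)
    have h2 := mB3 hn hβ0 hβ hM (inv_w ws) (hB_w hn hβ0 hβ hW ws hM) i (by omega)
    have h2' := mB2 hn hβ0 hβ hM (inv_wN ws) (hU1 hn hβ0 hβ hW ws hM) i (by omega)
    have e1 : TT n i (fun E v => sz E v * (sz E v * (w E * (NN E + sz E v))))
        = TT n i (fun E v => sz E v * (sz E v * (w E * NN E))) + TT n i (fun E v => sz E v * (sz E v ^ 2 * w E)) := by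
      rw [← TT_add]; congr 1; funext E v; ring
    have e2 : (fun E : Multiset (Sym2 (Fin n)) => inc E * (w E * (NN E * NN E)))
        = (fun E => inc E * (NN E ^ 2 * w E)) := by funext E; ring
    rw [e2] at h1
    have h3 := hi_div hβ hn hi'
    refine h1.trans ?_
    calc W * (((i : ℝ) + 1) / n ^ 2) * TT n i (fun E v => sz E v * (sz E v * (w E * (NN E + sz E v))))
        ≤ W * (((i : ℝ) + 1) / n ^ 2) * (2 * n * cU1 W β * (1 / (1 - β)) ^ 3 + 8 * n * cB W β * (1 / (1 - β)) ^ 5) := by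
          rw [e1]; gcongr
      _ = (2 * ((i : ℝ) + 1) / n ^ 2) * n * (W * (cU1 W β * (1 / (1 - β)) ^ 3 + 4 * cB W β * (1 / (1 - β)) ^ 5)) := by ring
      _ ≤ 1 / n * n * (W * (cU1 W β * (1 / (1 - β)) ^ 3 + 4 * cB W β * (1 / (1 - β)) ^ 5)) := by gcongr
      _ = _ := by rw [cU2]; field_simp

/-- increments of the partition function are small -/
lemma hh_inc (hn : 0 < n) {β : ℝ} (hβ0 : 0 ≤ β) (hβ : β < 1) (hW : 0 ≤ W) (ws : WS n ι W K σ lam w Q)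
    {M : ℕ} (hM : 2 * (M : ℝ) ≤ β * n)
    : ∀ i, i + 1 ≤ M → |hh n w (i + 1) - hh n w i|
    ≤ ((W + 1) * cB W β * (1 / (1 - β)) + cU2 W β) / n := by
  intro i hi
  have hn' : (0 : ℝ) < n := by exact_mod_cast hn
  have hn1 : (1 : ℝ) ≤ n := by exact_mod_cast hn
  have hB0 : 0 < cB W β := Real.exp_pos _
  have hc := mc1 hβ0 hβ
  have hc0 : 0 ≤ 1 / (1 - β) := by linarith
  have h1 := hU2 hn hβ0 hβ hW ws hM i (by omega)
  have h1' : 0 ≤ Ex n i (fun E => inc E * (NN E ^ 2 * w E)) := Ex_nonneg _ fun E =>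
    mul_nonneg (inc_nonneg E) (mul_nonneg (sq_nonneg _) (ws.nonneg E))
  have h2 := mA1 hn hβ0 hβ hM (inv_w ws) (hB_w hn hβ0 hβ hW ws hM) i (by omega)
  have h3 : |TT n i (fun E x => ∑ y ∈ cp E x, (w (s(x, y) ::ₘ E) - w E))|
      ≤ (W + 1) * TT n i (fun E v => sz E v * w E) := by
    rw [← TT_mul]
    apply Ex_abs_le
    intro E
    rw [abs_mul, abs_of_nonneg (inc_nonneg E)]
    apply mul_le_mul_of_nonneg_left _ (inc_nonneg E)
    refine (Finset.abs_sum_le_sum_abs _ _).trans (Finset.sum_le_sum fun v _ => ?_)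
    rw [abs_mul, abs_of_nonneg (itr_nonneg E v)]
    apply mul_le_mul_of_nonneg_left _ (itr_nonneg E v)
    refine (Finset.abs_sum_le_sum_abs _ _).trans ?_
    calc _ ≤ ∑ y ∈ cp E v, (W + 1) * w E := by
          apply Finset.sum_le_sum
          intro y hy
          rw [mem_cp] at hy
          have a1 := ws.same_le E v y hy.symm
          have a2 := ws.nonneg E
          have a3 := ws.nonneg (s(v, y) ::ₘ E)
          rw [abs_le]
          constructor <;> nlinarith
      _ = _ := by
          rw [Finset.sum_const, nsmul_eq_mul]; simp only [sz, vv]; ring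
  rw [process hn ws]
  have e : ∀ a b c : ℝ, a + 1 / n ^ 2 * b - 1 / n ^ 2 * c - a = 1 / n ^ 2 * (b - c) := by intros; ring
  rw [e, abs_mul, abs_of_nonneg (by positivity : (0 : ℝ) ≤ 1 / n ^ 2)]
  have h4 : |TT n i (fun E x => ∑ y ∈ cp E x, (w (s(x, y) ::ₘ E) - w E)) - Ex n i (fun E => inc E * (NN E ^ 2 * w E))|
      ≤ n * ((W + 1) * cB W β * (1 / (1 - β)) + cU2 W β) := by
    refine (abs_sub _ _).trans ?_
    rw [abs_of_nonneg h1']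
    have h5 := h3.trans (mul_le_mul_of_nonneg_left h2 (by linarith : 0 ≤ W + 1))
    have h6 : cU2 W β ≤ n * cU2 W β := le_mul_of_one_le_left (h1'.trans h1) hn1
    linarith
  calc _ ≤ 1 / (n : ℝ) ^ 2 * (n * ((W + 1) * cB W β * (1 / (1 - β)) + cU2 W β)) := by gcongr
    _ = _ := by field_simp

lemma sum_inr_itr (hn : 0 < n) {β : ℝ} (hβ0 : 0 ≤ β) (hβ : β < 1) (hW : 0 ≤ W) (ws : WS n ι W K σ lam w Q)
    {M : ℕ} (hM : 2 * (M : ℝ) ≤ β * n)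
    {E : Multiset (Sym2 (Fin n))} {v : Fin n} (hv : Tr E v) :
    ∑ u, inr E v u * itr E u = n - (NN E + sz E v) := by
  have e1 : sz E v = ∑ u, if Rch E u v then (1 : ℝ) else 0 := by
    simp [sz, vv, cp, Finset.sum_boole]
  have e2 : (n : ℝ) = ∑ u : Fin n, (1 : ℝ) := by simp
  rw [e1, NN, ← Finset.sum_add_distrib, e2, ← Finset.sum_sub_distrib]
  apply Finset.sum_congr rfl
  intro u _
  by_cases h : Rch E u v
  · have : Tr E u := (tr_congr h).mpr hv
    simp [inr, itr, h, this]
  · simp [inr, h]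

def cE (W K β : ℝ) : ℝ := cU1 W β + K * (cU1 W β * (1 / (1 - β)) + 2 * cB W β * (1 / (1 - β)) ^ 3)

/-- recursion for correlation sums -/
lemma S_rec (hn : 0 < n) {β : ℝ} (hβ0 : 0 ≤ β) (hβ : β < 1) (hW : 0 ≤ W) (ws : WS n ι W K σ lam w Q)
    {M : ℕ} (hM : 2 * (M : ℝ) ≤ β * n)
    (P : Multiset (Sym2 (Fin n)) → Fin n → Fin n → ℝ) {l : ℝ} (hl : |l| ≤ 1) {K' : ℝ} (hK : 0 ≤ K')
    (hd : ∀ E v, P E v v = w E)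
    (hext : ∀ E x u v, Rch E x v → ¬ Rch E u v → P (s(x, u) ::ₘ E) v u = l * P E v x)
    (habs : ∀ E u v, |P E u v| ≤ K' * w E) (i : ℕ) (hi : i + 1 ≤ M) :
    |TT n (i + 1) (fun E v => ∑ u ∈ cp E v, P E v u) / n - hh n w (i + 1)
      - l * (2 * ((i : ℝ) + 1) / n) * (TT n i (fun E v => ∑ u ∈ cp E v, P E v u) / n)| ≤ cE W K' β / n := by
  have hn' : (0 : ℝ) < n := by exact_mod_cast hn
  have hB0 : 0 < cB W β := Real.exp_pos _
  have hc := mc1 hβ0 hβ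
  have hc0 : 0 ≤ 1 / (1 - β) := by linarith
  have hi' : 2 * ((i : ℝ) + 1) ≤ β * n := by
    have : ((i + 1 : ℕ) : ℝ) ≤ M := by exact_mod_cast hi
    push_cast at this
    linarith
  have h3 := hi_div hβ hn hi'
  have h1 := bridge' hn i P
  simp only [hd] at h1
  have e1 : TT n (i + 1) (fun E _ => w E) = n * hh n w (i + 1) - Ex n (i + 1) (fun E => inc E * (w E * NN E)) := by
    rw [TT, hh, ← Ex_mul, ← Ex_sub]
    congr 1; funext E
    rw [← Finset.sum_mul, NN]
    simp only [Finset.sum_sub_distrib, Finset.sum_const, Finset.card_univ, Fintype.card_fin, nsmul_eq_mul]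
    ring
  set A := TT n i (fun E v => (NN E + sz E v) * ∑ x ∈ cp E v, P E v x) with hA
  have e2 : TT n i (fun E v => ∑ x ∈ cp E v, ∑ u, inr E v u * itr E u * P (s(x, u) ::ₘ E) v u)
      = l * (n * TT n i (fun E v => ∑ u ∈ cp E v, P E v u) - A) := by
    have : (n : ℝ) * TT n i (fun E v => ∑ u ∈ cp E v, P E v u) - A
      = TT n i (fun E v => (n - (NN E + sz E v)) * ∑ u ∈ cp E v, P E v u) := by
      rw [hA, ← TT_mul, sub_eq_iff_eq_add, ← TT_add]
      congr 1; funext E v; ring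
    rw [this, ← TT_mul, TT, TT]
    congr 1; funext E
    congr 1
    apply Finset.sum_congr rfl
    intro v _
    by_cases hv : Tr E v
    · congr 1
      rw [← sum_inr_itr hn hβ0 hβ hW ws hM hv, Finset.mul_sum, Finset.mul_sum]
      apply Finset.sum_congr rfl
      intro x hx
      rw [mem_cp] at hx
      rw [Finset.sum_mul, Finset.mul_sum]
      apply Finset.sum_congr rfl
      intro u _
      by_cases hu : Rch E u v
      · simp [inr, hu]
      · rw [hext E x u v hx hu]; ring
    · simp [itr, hv]
  have hAb : |A| ≤ n * (K' * (cU1 W β * (1 / (1 - β)) + 2 * cB W β * (1 / (1 - β)) ^ 3)) := by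
    have a1 : |A| ≤ TT n i (fun E v => K' * (sz E v * (w E * NN E) + sz E v * (sz E v * w E))) := by
      apply Ex_abs_le
      intro E
      rw [abs_mul, abs_of_nonneg (inc_nonneg E)]
      apply mul_le_mul_of_nonneg_left _ (inc_nonneg E)
      refine (Finset.abs_sum_le_sum_abs _ _).trans (Finset.sum_le_sum fun v _ => ?_)
      rw [abs_mul, abs_of_nonneg (itr_nonneg E v)]
      apply mul_le_mul_of_nonneg_left _ (itr_nonneg E v)
      have hp : 0 ≤ NN E + sz E v := add_nonneg (NN_nonneg E) (sz_nonneg _ _)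
      rw [abs_mul, abs_of_nonneg hp]
      have : |∑ x ∈ cp E v, P E v x| ≤ sz E v * (K' * w E) := by
        refine (Finset.abs_sum_le_sum_abs _ _).trans ((Finset.sum_le_sum fun x _ => habs E v x).trans ?_)
        rw [Finset.sum_const, nsmul_eq_mul]; rfl
      refine (mul_le_mul_of_nonneg_left this hp).trans (le_of_eq (by ring))
    rw [TT_mul, TT_add] at a1
    have a2 := mA1 hn hβ0 hβ hM (inv_wN ws) (hU1 hn hβ0 hβ hW ws hM) i (by omega)
    have a3 := mB2 hn hβ0 hβ hM (inv_w ws) (hB_w hn hβ0 hβ hW ws hM) i (by omega)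
    refine a1.trans ?_
    calc _ ≤ K' * (n * cU1 W β * (1 / (1 - β)) + 2 * n * cB W β * (1 / (1 - β)) ^ 3) := by gcongr
      _ = _ := by ring
  have hu := hU1 hn hβ0 hβ hW ws hM (i + 1) hi
  have hu0 : 0 ≤ Ex n (i + 1) (fun E => inc E * (w E * NN E)) := Ex_nonneg _ fun E =>
    mul_nonneg (inc_nonneg E) (mul_nonneg (ws.nonneg E) (NN_nonneg E))
  rw [h1, e1, e2]
  set T := TT n i (fun E v => ∑ u ∈ cp E v, P E v u)
  set u := Ex n (i + 1) (fun E => inc E * (w E * NN E))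
  have e3 : (n * hh n w (i + 1) - u + 2 * ((i : ℝ) + 1) / n ^ 2 * (l * (n * T - A))) / n - hh n w (i + 1)
      - l * (2 * ((i : ℝ) + 1) / n) * (T / n) = (-u - l * (2 * ((i : ℝ) + 1) / n ^ 2) * A) / n := by
    field_simp; ring
  rw [e3, abs_div, abs_of_pos hn']
  apply div_le_div_of_nonneg_right _ hn'.le
  refine (abs_sub _ _).trans ?_
  rw [abs_neg, abs_of_nonneg hu0, abs_mul, abs_mul, abs_of_nonneg (by positivity : 0 ≤ 2 * ((i : ℝ) + 1) / n ^ 2)]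
  rw [cE]
  apply add_le_add hu
  calc |l| * (2 * ((i : ℝ) + 1) / n ^ 2) * |A| ≤ 1 * (1 / n) * (n * (K' * (cU1 W β * (1 / (1 - β)) + 2 * cB W β * (1 / (1 - β)) ^ 3))) := by
        gcongr
    _ = _ := by field_simp


end Rec

section MainRec
open scoped Classical

lemma rec_abs {n : ℕ} (hn : 0 < n) {β : ℝ} (hβ0 : 0 ≤ β) (hβ : β < 1) {M : ℕ} (hM : 2 * (M : ℝ) ≤ β * n)
    {S h : ℕ → ℝ} {l B C0 e : ℝ} (hl : |l| ≤ 1) (h0 : S 0 = h 0) (hB : ∀ i ≤ M, |h i| ≤ B)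
    (hC : ∀ i, i + 1 ≤ M → |h (i + 1) - h i| ≤ C0 / n) (hC0 : 0 ≤ C0) (he : 0 ≤ e)
    (hS : ∀ i, i + 1 ≤ M → |S (i + 1) - h (i + 1) - l * (2 * ((i : ℝ) + 1) / n) * S i| ≤ e / n) :
    ∀ i ≤ M, |S i - h i / (1 - l * (2 * (i : ℝ) / n))|
      ≤ (C0 * (1 / (1 - β)) + 2 * B * (1 / (1 - β)) ^ 2 + e) * (1 / (1 - β)) / n := by
  have hn' : (0 : ℝ) < n := by exact_mod_cast hn
  have hb : 0 < 1 - β := by linarith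
  have hB0 : 0 ≤ B := (abs_nonneg _).trans (hB 0 (Nat.zero_le _))
  have hτ : ∀ i ≤ M, 2 * (i : ℝ) / n ≤ β ∧ 0 ≤ 2 * (i : ℝ) / n := by
    intro i hi
    have : (i : ℝ) ≤ M := by exact_mod_cast hi
    exact ⟨by rw [div_le_iff₀ hn']; linarith, by positivity⟩
  have hlt : ∀ i ≤ M, |l * (2 * (i : ℝ) / n)| ≤ β := by
    intro i hi
    obtain ⟨h1, h2⟩ := hτ i hi
    rw [abs_mul, abs_of_nonneg h2]
    nlinarith [abs_nonneg l]
  have hD : ∀ i ≤ M, 1 - β ≤ 1 - l * (2 * (i : ℝ) / n) := by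
    intro i hi
    linarith [(abs_le.mp (hlt i hi)).2]
  have hDi : ∀ i ≤ M, |(1 - l * (2 * (i : ℝ) / n))⁻¹| ≤ 1 / (1 - β) := by
    intro i hi
    have := hD i hi
    rw [abs_of_pos (by positivity [lt_of_lt_of_le hb this]), ← one_div]
    gcongr
  set c := 1 / (1 - β) with hc
  have hc0 : 0 < c := by positivity
  have hcb : β * c + 1 = c := by rw [hc]; field_simp; ring
  set F := C0 * c + 2 * B * c ^ 2 with hF
  have hF0 : 0 ≤ F := by positivity
  intro i
  induction i with
  | zero => intro _; simp only [h0, Nat.cast_zero]; simp; positivity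
  | succ i ih =>
    intro hi
    have ih := ih (by omega)
    have h1 := hS i hi
    have d1 := lt_of_lt_of_le hb (hD i (by omega))
    have d2 := lt_of_lt_of_le hb (hD (i+1) hi)
    have e1 := hDi i (by omega)
    have e2 := hDi (i+1) hi
    have e3 := hlt (i+1) hi
    push_cast at d2 e2 e3 ⊢
    set D := 1 - l * (2 * (i : ℝ) / n) with hDd
    set D' := 1 - l * (2 * ((i : ℝ) + 1) / n) with hDd'
    set t := l * (2 * ((i : ℝ) + 1) / n) with ht
    have key : |h i / D - h (i+1) / D'| ≤ F / n := by
      have e : h i / D - h (i+1) / D' = (h i - h (i+1)) * D'⁻¹ + h i * (-(l * (2/n))) * (D⁻¹ * D'⁻¹) := by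
        have : -(l * (2/n)) = D' - D := by rw [hDd, hDd', ht]; ring
        rw [this]; field_simp; ring
      rw [e]
      refine (abs_add_le _ _).trans ?_
      rw [abs_mul, abs_mul, abs_mul, abs_mul, abs_neg, abs_mul, abs_sub_comm, abs_of_pos (show (0:ℝ) < 2/n by positivity)]
      have := hC i hi
      have := hB i (by omega)
      calc _ ≤ C0 / n * c + B * (1 * (2/n)) * (c * c) := by gcongr
        _ = F / n := by rw [hF]; ring
    have e4 : S (i+1) - h (i+1) / D' = (S (i+1) - h (i+1) - t * S i) + t * ((S i - h i / D) + (h i / D - h (i+1)/D')) := by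
      have : t = 1 - D' := by rw [hDd']; ring
      rw [this]; field_simp; ring
    rw [e4]
    refine (abs_add_le _ _).trans ?_
    rw [abs_mul]
    have : |(S i - h i / D) + (h i / D - h (i+1)/D')| ≤ (F + e) * c / n + F / n :=
      (abs_add_le _ _).trans (add_le_add ih key)
    calc _ ≤ e / n + β * ((F + e) * c / n + F / n) := by gcongr
      _ ≤ ((F + e) * (β * c + 1)) / n := by
        have : e / n + β * ((F + e) * c / n + F / n) = (e + β * ((F+e)*c + F)) / n := by ring
        rw [this]
        gcongr
        nlinarith
      _ = _ := by rw [hcb]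

variable {n : ℕ}
variable {ι : Type} [Fintype ι] {W K σ : ℝ} {lam : ι → ℝ}
    {w : Multiset (Sym2 (Fin n)) → ℝ}
    {Q : ι → Multiset (Sym2 (Fin n)) → Fin n → Fin n → ℝ}

def cS (W K β : ℝ) : ℝ := (((W + 1) * cB W β * (1 / (1 - β)) + cU2 W β) * (1 / (1 - β))
  + 2 * cB W β * (1 / (1 - β)) ^ 2 + cE W K β) * (1 / (1 - β))

lemma hh_zero (ws : WS n ι W K σ lam w Q) : hh n w 0 = Ex n 0 (fun E => inc E) := by
  rw [hh, Ex_zero, Ex_zero, ws.zero, mul_one]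

lemma S_bound (hn : 0 < n) {β : ℝ} (hβ0 : 0 ≤ β) (hβ : β < 1) (hW : 0 ≤ W) (ws : WS n ι W K σ lam w Q)
    {M : ℕ} (hM : 2 * (M : ℝ) ≤ β * n)
    (P : Multiset (Sym2 (Fin n)) → Fin n → Fin n → ℝ) {l : ℝ} (hl : |l| ≤ 1) {K' : ℝ} (hK : 0 ≤ K')
    (hd : ∀ E v, P E v v = w E)
    (hext : ∀ E x u v, Rch E x v → ¬ Rch E u v → P (s(x, u) ::ₘ E) v u = l * P E v x)
    (habs : ∀ E u v, |P E u v| ≤ K' * w E) : ∀ i ≤ M,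
    |TT n i (fun E v => ∑ u ∈ cp E v, P E v u) / n - hh n w i / (1 - l * (2 * (i : ℝ) / n))| ≤ cS W K' β / n := by
  have hc := mc1 hβ0 hβ
  have hc0 : 0 ≤ 1 / (1 - β) := by linarith
  have hB0 : 0 < cB W β := Real.exp_pos _
  have hn' : (0 : ℝ) < n := by exact_mod_cast hn
  have hU10 : 0 ≤ cU1 W β := by unfold cU1; positivity
  have hU20 : 0 ≤ cU2 W β := by unfold cU2; positivity
  apply rec_abs hn hβ0 hβ hM (S := fun i => TT n i (fun E v => ∑ u ∈ cp E v, P E v u) / n) (h := hh n w) hl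
  · simp only [TT, hh, Ex_zero, cp_zero, Finset.sum_singleton, hd]
    have : ∀ v : Fin n, itr (0 : Multiset (Sym2 (Fin n))) v = 1 := by
      intro v
      have h : NN (0 : Multiset (Sym2 (Fin n))) = 0 := NN_zero
      rw [NN, Finset.sum_eq_zero_iff_of_nonneg] at h
      · linarith [h v (Finset.mem_univ v)]
      · intro v _
        linarith [itr_le_one (0 : Multiset (Sym2 (Fin n))) v]
    simp only [this]
    simp
    field_simp
  · intro i hi
    rw [abs_of_nonneg]
    · exact hB_w hn hβ0 hβ hW ws hM i hi
    · exact Ex_nonneg _ fun E => mul_nonneg (inc_nonneg E) (ws.nonneg E)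
  · exact hh_inc hn hβ0 hβ hW ws hM
  · positivity
  · unfold cE; positivity
  · exact fun i hi => S_rec hn hβ0 hβ hW ws hM P hl hK hd hext habs i hi

def cR (W K σ : ℝ) (lam : ι → ℝ) (β : ℝ) : ℝ :=
  σ * (∑ _j : ι, cS W K β) + cS W 1 β + cU2 W β

def rho (σ : ℝ) (lam : ι → ℝ) (t : ℝ) : ℝ := σ * ∑ j, lam j / (1 - lam j * t) - 1 / (1 - t)

lemma TT_sum {κ : Type} (s : Finset κ) (i : ℕ) (F : κ → Multiset (Sym2 (Fin n)) → Fin n → ℝ) :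
    TT n i (fun E v => ∑ j ∈ s, F j E v) = ∑ j ∈ s, TT n i (F j) := by
  induction s using Finset.induction_on with
  | empty =>
    simp only [Finset.sum_empty]
    have := TT_mul (n := n) i 0 (fun _ _ => 0)
    simpa using this
  | insert a s ha ih =>
    simp only [Finset.sum_insert ha]
    rw [TT_add, ih]

lemma main_rec (hn : 0 < n) {β : ℝ} (hβ0 : 0 ≤ β) (hβ : β < 1) (hW : 0 ≤ W) (hK : 0 ≤ K) (hσ : 0 < σ)
    (hlam : ∀ j, |lam j| ≤ 1) (ws : WS n ι W K σ lam w Q)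
    {M : ℕ} (hM : 2 * (M : ℝ) ≤ β * n) (i : ℕ) (hi : i ≤ M) :
    |hh n w (i + 1) - hh n w i * (1 + rho σ lam (2 * (i : ℝ) / n) / n)| ≤ cR W K σ lam β / n ^ 2 := by
  have hn' : (0 : ℝ) < n := by exact_mod_cast hn
  set h := hh n w i with hh'
  set t := 2 * (i : ℝ) / n with ht
  have b1 := S_bound hn hβ0 hβ hW ws hM (fun E _ _ => w E) (l := 1) (by simp) zero_le_one (fun _ _ => rfl)
    (fun E x u v hx hu => by
      rw [one_mul]
      exact ws.diff E x u (fun h => hu (h.symm.trans hx)))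
    (fun E u v => by rw [one_mul, abs_of_nonneg (ws.nonneg E)]) i hi
  have b2 := fun j => S_bound hn hβ0 hβ hW ws hM (Q j) (hlam j) hK (ws.diag j) (ws.ext j) (ws.abs_le j) i hi
  set A := TT n i (fun E v => ∑ u ∈ cp E v, w E) with hA
  have e1 : TT n i (fun E x => ∑ y ∈ cp E x, (w (s(x, y) ::ₘ E) - w E))
      = σ * ∑ j, lam j * TT n i (fun E v => ∑ u ∈ cp E v, Q j E v u) - A := by
    rw [eq_sub_iff_add_eq, hA, ← TT_add]
    simp only [← TT_mul]
    rw [← TT_sum Finset.univ i (fun j E v => lam j * ∑ u ∈ cp E v, Q j E v u), ← TT_mul]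
    congr 1; funext E v
    rw [← Finset.sum_add_distrib]
    simp only [sub_add_cancel, Finset.mul_sum]
    rw [Finset.sum_comm]
    apply Finset.sum_congr rfl
    intro y hy
    rw [mem_cp] at hy
    rw [ws.same E v y hy.symm, Finset.mul_sum]
  have u1 := hU2 hn hβ0 hβ hW ws hM i hi
  have u0 : 0 ≤ Ex n i (fun E => inc E * (NN E ^ 2 * w E)) := Ex_nonneg _ fun E =>
    mul_nonneg (inc_nonneg E) (mul_nonneg (sq_nonneg _) (ws.nonneg E))
  set U := Ex n i (fun E => inc E * (NN E ^ 2 * w E)) with hU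
  set S : ι → ℝ := fun j => TT n i (fun E v => ∑ u ∈ cp E v, Q j E v u) with hS
  have e2 : hh n w (i+1) - h * (1 + rho σ lam t / n)
      = (σ * ∑ j, lam j * (S j / n - h / (1 - lam j * t)) - (A / n - h / (1 - 1 * t))) / n - U / n ^ 2 := by
    rw [process hn ws, e1, rho]
    simp only [mul_sub, Finset.sum_sub_distrib]
    have : ∑ j, lam j * (S j / n) = (∑ j, lam j * S j) / n := by
      rw [Finset.sum_div]; apply Finset.sum_congr rfl; intro j _; ring
    rw [this]
    have : ∑ j, lam j * (h / (1 - lam j * t)) = h * ∑ j, lam j / (1 - lam j * t) := by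
      rw [Finset.mul_sum]; apply Finset.sum_congr rfl; intro j _; ring
    rw [this]
    have hne : (n : ℝ) ≠ 0 := hn'.ne'
    rw [← hh', ← hU]
    simp only [hS, one_mul]
    generalize (∑ j, lam j / (1 - lam j * t)) = X
    generalize (∑ j, lam j * TT n i (fun E v => ∑ u ∈ cp E v, Q j E v u)) = Y
    rw [div_eq_mul_one_div h (1 - t)]
    generalize 1 / (1 - t) = Z
    field_simp
    ring
  rw [e2]
  have p1 : |σ * ∑ j, lam j * (S j / n - h / (1 - lam j * t))| ≤ σ * (∑ _j : ι, cS W K β) / n := by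
    rw [abs_mul, abs_of_pos hσ, mul_div_assoc, Finset.sum_div]
    gcongr
    refine (Finset.abs_sum_le_sum_abs _ _).trans (Finset.sum_le_sum fun j _ => ?_)
    rw [abs_mul]
    calc _ ≤ 1 * (cS W K β / n) := by
          gcongr
          · exact hlam j
          · exact b2 j
      _ = _ := one_mul _
  calc _ ≤ |σ * ∑ j, lam j * (S j / n - h / (1 - lam j * t)) - (A / n - h / (1 - 1 * t))| / n + U / n ^ 2 := by
        refine (abs_sub _ _).trans ?_
        rw [abs_div, abs_div, abs_of_pos hn', abs_of_nonneg u0, abs_of_pos (show (0:ℝ) < (n:ℝ)^2 by positivity)]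
    _ ≤ (σ * (∑ _j : ι, cS W K β) / n + cS W 1 β / n) / n + cU2 W β / n ^ 2 := by
        gcongr
        exact (abs_sub _ _).trans (add_le_add p1 b1)
    _ = _ := by rw [cR]; field_simp

end MainRec

section Gron
open scoped Classical

variable {ι : Type} [Fintype ι]

def LL (σ : ℝ) (lam : ι → ℝ) (t : ℝ) : ℝ :=
  1 / 2 * Real.log (1 - t) - σ / 2 * ∑ j, Real.log (1 - lam j * t)

def HH (σ : ℝ) (lam : ι → ℝ) (t : ℝ) : ℝ := Real.exp (LL σ lam t)

def rho' (σ : ℝ) (lam : ι → ℝ) (t : ℝ) : ℝ :=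
  σ * ∑ j, lam j ^ 2 / (1 - lam j * t) ^ 2 - 1 / (1 - t) ^ 2

lemma one_sub_pos {β t l : ℝ} (hβ : β < 1) (hl : |l| ≤ 1) (ht : t ∈ Set.Icc 0 β) : 0 < 1 - l * t := by
  have h1 := abs_le.mp hl
  have h2 := ht.1
  have h3 := ht.2
  nlinarith

lemma LL_deriv (σ : ℝ) {lam : ι → ℝ} (hlam : ∀ j, |lam j| ≤ 1) {β t : ℝ} (hβ : β < 1) (ht : t ∈ Set.Icc 0 β) :
    HasDerivAt (LL σ lam) (1 / 2 * rho σ lam t) t := by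
  have h1 : 0 < 1 - t := by linarith [ht.2]
  have d1 : HasDerivAt (fun t : ℝ => Real.log (1 - t)) (-1 / (1 - t)) t :=
    ((hasDerivAt_id t).const_sub 1).log h1.ne'
  have d2 : ∀ j ∈ Finset.univ, HasDerivAt (fun t : ℝ => Real.log (1 - lam j * t)) (-lam j / (1 - lam j * t)) t := by
    intro j _
    have := (((hasDerivAt_id t).const_mul (lam j)).const_sub 1).log (one_sub_pos hβ (hlam j) ht).ne'
    simpa using this
  have d3 := (d1.const_mul (1/2)).sub ((HasDerivAt.fun_sum d2).const_mul (σ/2))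
  refine d3.congr_deriv ?_
  simp only [rho, neg_div, Finset.sum_neg_distrib]
  ring

lemma HH_deriv (σ : ℝ) {lam : ι → ℝ} (hlam : ∀ j, |lam j| ≤ 1) {β t : ℝ} (hβ : β < 1) (ht : t ∈ Set.Icc 0 β) :
    HasDerivAt (HH σ lam) (1 / 2 * (rho σ lam t * HH σ lam t)) t := by
  refine (LL_deriv σ hlam hβ ht).exp.congr_deriv ?_
  rw [HH]; ring

lemma rho_deriv (σ : ℝ) {lam : ι → ℝ} (hlam : ∀ j, |lam j| ≤ 1) {β t : ℝ} (hβ : β < 1) (ht : t ∈ Set.Icc 0 β) :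
    HasDerivAt (rho σ lam) (rho' σ lam t) t := by
  have h1 : 0 < 1 - t := by linarith [ht.2]
  have d1 : HasDerivAt (fun t : ℝ => 1 / (1 - t)) (1 / (1 - t) ^ 2) t := by
    have := ((hasDerivAt_id t).const_sub 1).inv h1.ne'
    simp only [one_div]
    refine this.congr_deriv ?_
    simp
  have d2 : ∀ j ∈ Finset.univ, HasDerivAt (fun t : ℝ => lam j / (1 - lam j * t)) (lam j ^ 2 / (1 - lam j * t) ^ 2) t := by
    intro j _
    have := ((((hasDerivAt_id t).const_mul (lam j)).const_sub 1).inv (one_sub_pos hβ (hlam j) ht).ne').const_mul (lam j)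
    refine this.congr_deriv ?_
    simp; ring
  exact ((HasDerivAt.fun_sum d2).const_mul σ).sub d1

lemma rho'_cont (σ : ℝ) {lam : ι → ℝ} (hlam : ∀ j, |lam j| ≤ 1) {β : ℝ} (hβ : β < 1) :
    ContinuousOn (rho' σ lam) (Set.Icc 0 β) := by
  unfold rho'
  apply ContinuousOn.sub
  · apply ContinuousOn.mul continuousOn_const
    apply continuousOn_finsetSum
    intro j _
    apply ContinuousOn.div (by fun_prop) (by fun_prop)
    intro t ht
    have := one_sub_pos hβ (hlam j) ht
    positivity
  · apply ContinuousOn.div (by fun_prop) (by fun_prop)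
    intro t ht
    have : 0 < 1 - t := by linarith [ht.2]
    positivity

lemma HH_taylor (σ : ℝ) {lam : ι → ℝ} (hlam : ∀ j, |lam j| ≤ 1) {β : ℝ} (hβ : β < 1) :
    ∃ C : ℝ, 0 ≤ C ∧ ∀ x ∈ Set.Icc 0 β, ∀ y ∈ Set.Icc 0 β, x ≤ y →
      |HH σ lam y - HH σ lam x - 1 / 2 * (rho σ lam x * HH σ lam x) * (y - x)| ≤ C * (y - x) ^ 2 := by
  set G : ℝ → ℝ := fun t => 1 / 2 * (rho σ lam t * HH σ lam t) with hG
  set G' : ℝ → ℝ := fun t => 1 / 2 * (rho' σ lam t * HH σ lam t + rho σ lam t * (1 / 2 * (rho σ lam t * HH σ lam t)))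
  have dG : ∀ t ∈ Set.Icc 0 β, HasDerivAt G (G' t) t := fun t ht =>
    ((rho_deriv σ hlam hβ ht).mul (HH_deriv σ hlam hβ ht)).const_mul (1/2)
  have cH : ContinuousOn (HH σ lam) (Set.Icc 0 β) := fun t ht => (HH_deriv σ hlam hβ ht).continuousAt.continuousWithinAt
  have cr : ContinuousOn (rho σ lam) (Set.Icc 0 β) := fun t ht => (rho_deriv σ hlam hβ ht).continuousAt.continuousWithinAt
  have cr' := rho'_cont σ hlam hβ
  have cG' : ContinuousOn G' (Set.Icc 0 β) := by fun_prop
  obtain ⟨C, hC⟩ := isCompact_Icc.exists_bound_of_continuousOn cG'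
  refine ⟨|C|, abs_nonneg _, fun x hx y hy hxy => ?_⟩
  have sub : Set.Icc x y ⊆ Set.Icc 0 β := Set.Icc_subset_Icc hx.1 hy.2
  have lip : ∀ s ∈ Set.Icc x y, ‖G s - G x‖ ≤ |C| * (y - x) := by
    intro s hs
    have := (convex_Icc (0:ℝ) β).norm_image_sub_le_of_norm_hasDerivWithin_le
      (fun t ht => (dG t ht).hasDerivWithinAt) (fun t ht => (hC t ht).trans (le_abs_self C)) hx (sub hs)
    refine this.trans ?_
    rw [Real.norm_of_nonneg (by linarith [hs.1])]
    gcongr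
    exact hs.2
  have := (convex_Icc x y).norm_image_sub_le_of_norm_hasDerivWithin_le
    (f := fun s => HH σ lam s - G x * s) (f' := fun s => G s - G x) (C := |C| * (y - x))
    (fun s hs => by
      have := (HH_deriv σ hlam hβ (sub hs)).sub ((hasDerivAt_id s).const_mul (G x))
      refine (this.congr_deriv ?_).hasDerivWithinAt
      simp [hG]) lip (Set.left_mem_Icc.mpr hxy) (Set.right_mem_Icc.mpr hxy)
  rw [Real.norm_eq_abs, Real.norm_of_nonneg (by linarith)] at this
  calc _ = |HH σ lam y - G x * y - (HH σ lam x - G x * x)| := by congr 1; simp only [hG]; ring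
    _ ≤ _ := this
    _ = _ := by ring

lemma rho_bdd (σ : ℝ) {lam : ι → ℝ} (hlam : ∀ j, |lam j| ≤ 1) {β : ℝ} (hβ : β < 1) :
    ∃ C : ℝ, 0 ≤ C ∧ ∀ x ∈ Set.Icc 0 β, |rho σ lam x| ≤ C := by
  have cr : ContinuousOn (rho σ lam) (Set.Icc 0 β) := fun t ht => (rho_deriv σ hlam hβ ht).continuousAt.continuousWithinAt
  obtain ⟨C, hC⟩ := isCompact_Icc.exists_bound_of_continuousOn cr
  exact ⟨|C|, abs_nonneg _, fun x hx => (hC x hx).trans (le_abs_self C)⟩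

lemma HH_lower (σ : ℝ) {lam : ι → ℝ} (hlam : ∀ j, |lam j| ≤ 1) {β : ℝ} (hβ0 : 0 ≤ β) (hβ : β < 1) :
    ∃ d : ℝ, 0 < d ∧ ∀ x ∈ Set.Icc 0 β, d ≤ HH σ lam x := by
  have cH : ContinuousOn (HH σ lam) (Set.Icc 0 β) := fun t ht => (HH_deriv σ hlam hβ ht).continuousAt.continuousWithinAt
  obtain ⟨x, _, h⟩ := isCompact_Icc.exists_isMinOn (Set.nonempty_Icc.mpr hβ0) cH
  exact ⟨HH σ lam x, Real.exp_pos _, fun y hy => h hy⟩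

lemma hh_zero_eq {n : ℕ} {W K σ : ℝ} {lam : ι → ℝ} {w : Multiset (Sym2 (Fin n)) → ℝ}
    {Q : ι → Multiset (Sym2 (Fin n)) → Fin n → Fin n → ℝ} (ws : WS n ι W K σ lam w Q) : hh n w 0 = 1 := by
  rw [hh, Ex_zero, ws.zero, mul_one, inc, if_pos]
  intro v
  have := vv_pos (0 : Multiset (Sym2 (Fin n))) v
  simp [ev]

theorem hh_approx {W K σ : ℝ} {lam : ι → ℝ} {β : ℝ} (hβ0 : 0 ≤ β) (hβ : β < 1) (hW : 0 ≤ W) (hK : 0 ≤ K)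
    (hσ : 0 < σ) (hlam : ∀ j, |lam j| ≤ 1) :
    ∃ C : ℝ, ∀ (n : ℕ) (w : Multiset (Sym2 (Fin n)) → ℝ)
      (Q : ι → Multiset (Sym2 (Fin n)) → Fin n → Fin n → ℝ), 0 < n → WS n ι W K σ lam w Q →
      ∀ M : ℕ, 2 * (M : ℝ) ≤ β * n → |hh n w M - HH σ lam (2 * (M : ℝ) / n)| ≤ C / n := by
  obtain ⟨C1, hC1, T⟩ := HH_taylor σ hlam hβ
  obtain ⟨L, hL, hr⟩ := rho_bdd σ hlam hβ
  set C2 := |cR W K σ lam β| + 4 * C1 with hC2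
  have hC20 : 0 ≤ C2 := by positivity
  refine ⟨C2 * Real.exp L, fun n w Q hn ws M hM => ?_⟩
  have hn' : (0 : ℝ) < n := by exact_mod_cast hn
  have key : ∀ i ≤ M, |hh n w i - HH σ lam (2 * (i : ℝ) / n)| ≤ C2 * i / n ^ 2 * (1 + L / n) ^ i := by
    intro i
    induction i with
    | zero =>
      intro _
      rw [hh_zero_eq ws]
      simp [HH, LL]
    | succ i ih =>
      intro hi
      have ih := ih (by omega)
      have hiM : ((i : ℝ) + 1) ≤ M := by exact_mod_cast hi
      have hx : 2 * (i : ℝ) / n ∈ Set.Icc 0 β := ⟨by positivity, by rw [div_le_iff₀ hn']; linarith⟩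
      have hy : 2 * ((i : ℝ) + 1) / n ∈ Set.Icc 0 β := ⟨by positivity, by rw [div_le_iff₀ hn']; linarith⟩
      have hxy : 2 * (i : ℝ) / n ≤ 2 * ((i : ℝ) + 1) / n := by gcongr; linarith
      have t1 := T _ hx _ hy hxy
      have m1 := main_rec hn hβ0 hβ hW hK hσ hlam ws hM i (by omega)
      have r1 := hr _ hx
      push_cast
      have e0 : 2 * ((i : ℝ) + 1) / n - 2 * (i : ℝ) / n = 2 / n := by ring
      rw [e0] at t1
      set x := 2 * (i : ℝ) / n
      set y := 2 * ((i : ℝ) + 1) / n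
      have e1 : hh n w (i+1) - HH σ lam y = (hh n w (i+1) - hh n w i * (1 + rho σ lam x / n))
        - (HH σ lam y - HH σ lam x - 1 / 2 * (rho σ lam x * HH σ lam x) * (2 / n))
        + (hh n w i - HH σ lam x) * (1 + rho σ lam x / n) := by ring
      rw [e1]
      have a1 : |1 + rho σ lam x / n| ≤ 1 + L / n := by
        refine (abs_add_le _ _).trans ?_
        rw [abs_one, abs_div, abs_of_pos hn']
        gcongr
      have hp : 1 ≤ (1 + L / n) ^ (i + 1) := one_le_pow₀ (by linarith [show 0 ≤ L / n by positivity])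
      calc _ ≤ (cR W K σ lam β / n ^ 2 + C1 * (2 / n) ^ 2) + C2 * i / n ^ 2 * (1 + L / n) ^ i * (1 + L / n) := by
            refine (abs_add_le _ _).trans (add_le_add ((abs_sub _ _).trans (add_le_add m1 t1)) ?_)
            rw [abs_mul]
            gcongr
        _ ≤ C2 / n ^ 2 * 1 + C2 * i / n ^ 2 * (1 + L / n) ^ (i + 1) := by
            have := le_abs_self (cR W K σ lam β)
            have e : C2 / n ^ 2 * 1 = |cR W K σ lam β| / n ^ 2 + C1 * (2 / n) ^ 2 := by
              rw [hC2]; ring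
            rw [e, pow_succ (1 + L / (n : ℝ))]
            have : cR W K σ lam β / n ^ 2 ≤ |cR W K σ lam β| / n ^ 2 := by gcongr
            linarith
        _ ≤ C2 / n ^ 2 * (1 + L / n) ^ (i + 1) + C2 * i / n ^ 2 * (1 + L / n) ^ (i + 1) := by gcongr
        _ = _ := by ring
  refine (key M le_rfl).trans ?_
  have hMn : (M : ℝ) ≤ n := by nlinarith
  have h1 : (1 + L / n) ^ M ≤ Real.exp L := by
    calc (1 + L / n) ^ M ≤ Real.exp (L / n) ^ M := by
          gcongr
          linarith [Real.add_one_le_exp (L / n)]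
      _ = Real.exp (M * (L / n)) := by rw [← Real.exp_nat_mul]
      _ ≤ _ := by
        apply Real.exp_le_exp.mpr
        calc M * (L / n) ≤ n * (L / n) := by gcongr
          _ = L := by field_simp
  calc C2 * M / n ^ 2 * (1 + L / n) ^ M ≤ C2 * n / n ^ 2 * Real.exp L := by gcongr
    _ = _ := by field_simp

end Gron

section Spec
open scoped Classical

variable {q : ℕ}

lemma spec_exists {R : Matrix (Fin q) (Fin q) ℝ} (hs : R.IsSymm) :
    ∃ (lam : Fin q → ℝ) (φ : Fin q → Fin q → ℝ),
      (∀ i j, ∑ a, φ i a * φ j a = if i = j then 1 else 0) ∧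
      (∀ a b, ∑ i, φ i a * φ i b = if a = b then 1 else 0) ∧
      (∀ i a, ∑ b, R a b * φ i b = lam i * φ i a) ∧
      R.charpoly.roots = Finset.univ.val.map lam := by
  have hH : R.IsHermitian := by
    rw [Matrix.IsHermitian, Matrix.conjTranspose_eq_transpose_of_trivial]; exact hs
  have ho : ∀ i j, ∑ a, hH.eigenvectorBasis i a * hH.eigenvectorBasis j a = if i = j then (1:ℝ) else 0 := by
    intro i j
    have := orthonormal_iff_ite.mp hH.eigenvectorBasis.orthonormal i j
    rw [PiLp.inner_apply] at this
    rw [← this]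
    apply Finset.sum_congr rfl
    intro a _
    simp [mul_comm]
  refine ⟨hH.eigenvalues, fun i a => hH.eigenvectorBasis i a, ho, ?_, ?_, ?_⟩
  · set P : Matrix (Fin q) (Fin q) ℝ := fun i a => hH.eigenvectorBasis i a with hP
    have h1 : P * P.transpose = 1 := by
      ext i j
      rw [Matrix.mul_apply, Matrix.one_apply]
      exact ho i j
    have h2 := mul_eq_one_comm.mp h1
    intro a b
    have := congrFun (congrFun h2 a) b
    rw [Matrix.mul_apply, Matrix.one_apply] at this
    exact this
  · intro i a
    have := congrFun (hH.mulVec_eigenvectorBasis i) a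
    simpa [Matrix.mulVec, dotProduct] using this
  · have := hH.roots_charpoly_eq_eigenvalues
    simpa using this

lemma lam_le {R : Matrix (Fin q) (Fin q) ℝ} (hR0 : ∀ i j, 0 ≤ R i j) (hrow : ∀ i, ∑ j, R i j = 1)
    {l : ℝ} {v : Fin q → ℝ} (hv : ∑ a, v a * v a = 1) (he : ∀ a, ∑ b, R a b * v b = l * v a) : |l| ≤ 1 := by
  have hne : Nonempty (Fin q) := by
    by_contra h
    rw [not_nonempty_iff] at h
    simp at hv
  obtain ⟨a, ha⟩ := Finite.exists_max (fun a => |v a|)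
  have hpos : 0 < |v a| := by
    by_contra h
    have h0 : ∀ b, v b = 0 := fun b => abs_nonpos_iff.mp ((ha b).trans (not_lt.mp h))
    simp [h0] at hv
  have h1 : |l| * |v a| ≤ 1 * |v a| := by
    rw [← abs_mul, ← he a, ← hrow a, Finset.sum_mul]
    refine (Finset.abs_sum_le_sum_abs _ _).trans (Finset.sum_le_sum fun b _ => ?_)
    rw [abs_mul, abs_of_nonneg (hR0 a b)]
    exact mul_le_mul_of_nonneg_left (ha b) (hR0 a b)
  exact le_of_mul_le_mul_right h1 hpos

lemma const_of_eig {R : Matrix (Fin q) (Fin q) ℝ} (hs : R.IsSymm) (hR0 : ∀ i j, 0 ≤ R i j)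
    (hrow : ∀ i, ∑ j, R i j = 1)
    (hconn : (SimpleGraph.fromRel fun i j : Fin q => R i j ≠ 0).Connected)
    {v : Fin q → ℝ} (he : ∀ a, ∑ b, R a b * v b = v a) : ∃ c, ∀ a, v a = c := by
  have hne := hconn.nonempty
  obtain ⟨a, ha⟩ := Finite.exists_max v
  refine ⟨v a, fun b => ?_⟩
  have step : ∀ x y, R x y ≠ 0 → v x = v a → v y = v a := by
    intro x y hxy hx
    have h0 : ∑ b, R x b * (v a - v b) = 0 := by
      simp only [mul_sub, Finset.sum_sub_distrib]
      rw [← Finset.sum_mul, hrow, he, hx]; ring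
    rw [Finset.sum_eq_zero_iff_of_nonneg (fun b _ => mul_nonneg (hR0 x b) (by linarith [ha b]))] at h0
    have := (mul_eq_zero.mp (h0 y (Finset.mem_univ y))).resolve_left hxy
    linarith
  obtain ⟨p⟩ := hconn.preconnected b a
  induction p with
  | nil => rfl
  | @cons x y z h p ih =>
    have h1 := ih ha (fun x y => step x y)
    rw [SimpleGraph.fromRel_adj] at h
    rcases h.2 with h2 | h2
    · exact step y x (by rw [hs.apply]; exact h2) h1
    · exact step y x h2 h1

lemma simple_one {R : Matrix (Fin q) (Fin q) ℝ} (hs : R.IsSymm) (hR0 : ∀ i j, 0 ≤ R i j)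
    (hrow : ∀ i, ∑ j, R i j = 1)
    (hconn : (SimpleGraph.fromRel fun i j : Fin q => R i j ≠ 0).Connected)
    {lam : Fin q → ℝ} {φ : Fin q → Fin q → ℝ}
    (ho : ∀ i j, ∑ a, φ i a * φ j a = if i = j then 1 else 0)
    (hc : ∀ a b, ∑ i, φ i a * φ i b = if a = b then 1 else 0)
    (he : ∀ i a, ∑ b, R a b * φ i b = lam i * φ i a) :
    ∃ i0, lam i0 = 1 ∧ ∀ i, lam i = 1 → i = i0 := by
  obtain ⟨a0⟩ := hconn.nonempty
  have hex : ∃ i0, lam i0 = 1 := by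
    by_contra! h
    have z : ∀ i, ∑ b, φ i b = 0 := by
      intro i
      have h1 : ∑ a, ∑ b, R a b * φ i b = lam i * ∑ a, φ i a := by
        rw [Finset.mul_sum]; exact Finset.sum_congr rfl fun a _ => he i a
      rw [Finset.sum_comm] at h1
      have h2 : ∑ b, ∑ a, R a b * φ i b = ∑ b, φ i b := by
        apply Finset.sum_congr rfl
        intro b _
        rw [← Finset.sum_mul]
        have : ∑ a, R a b = 1 := by
          rw [← hrow b]; exact Finset.sum_congr rfl fun a _ => hs.apply b a
        rw [this, one_mul]
      rw [h2] at h1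
      have h3 : (lam i - 1) * ∑ b, φ i b = 0 := by linarith
      exact (mul_eq_zero.mp h3).resolve_left (sub_ne_zero.mpr (h i))
    have h4 : ∑ b, ∑ i, φ i a0 * φ i b = 1 := by
      simp [hc]
    rw [Finset.sum_comm] at h4
    simp [← Finset.mul_sum, z] at h4
  obtain ⟨i0, h0⟩ := hex
  refine ⟨i0, h0, fun i hi => ?_⟩
  by_contra hne
  obtain ⟨c, h1⟩ := const_of_eig hs hR0 hrow hconn (v := φ i) (fun a => by rw [he, hi, one_mul])
  obtain ⟨d, h2⟩ := const_of_eig hs hR0 hrow hconn (v := φ i0) (fun a => by rw [he, h0, one_mul])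
  have o1 := ho i i
  have o2 := ho i0 i0
  have o3 := ho i i0
  simp only [h1, h2, if_neg hne, if_true, Finset.sum_const, nsmul_eq_mul] at o1 o2 o3
  set N : ℝ := ((Finset.univ : Finset (Fin q)).card : ℝ)
  have : (N * (c * c)) * (N * (d * d)) = (N * (c * d)) * (N * (c * d)) := by ring
  rw [o1, o2, o3] at this
  norm_num at this

lemma HH_eq {lam : Fin q → ℝ} {i0 : Fin q} (h0 : lam i0 = 1) (h1 : ∀ i, lam i = 1 → i = i0) (σ : ℝ)
    (hlam : ∀ j, |lam j| ≤ 1) {β t : ℝ} (hβ : β < 1) (ht : t ∈ Set.Icc 0 β) :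
    HH σ lam t = (1 - t) ^ ((1 - σ) / 2) *
      (((Finset.univ.val.map lam).filter (· ≠ 1)).map fun l => 1 - l * t).prod ^ (-(σ / 2)) := by
  have e : (((Finset.univ.val.map lam).filter (· ≠ 1)).map fun l => 1 - l * t).prod
      = ∏ i ∈ Finset.univ.erase i0, (1 - lam i * t) := by
    rw [Multiset.filter_map, Multiset.map_map]
    have : Multiset.filter ((fun x => x ≠ 1) ∘ lam) Finset.univ.val = (Finset.univ.erase i0).val := by
      rw [← Finset.filter_val]
      congr 1
      ext i
      simp only [Finset.mem_filter, Finset.mem_univ, true_and, Function.comp, Finset.mem_erase, and_true]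
      exact ⟨fun h h' => h (h' ▸ h0), fun h h' => h (h1 i h')⟩
    rw [this]
    rfl
  rw [e]
  have p1 : 0 < 1 - t := by linarith [ht.2]
  have p2 : ∀ j, 0 < 1 - lam j * t := fun j => one_sub_pos hβ (hlam j) ht
  rw [Real.rpow_def_of_pos p1, Real.rpow_def_of_pos (Finset.prod_pos fun i _ => p2 i),
    Real.log_prod (fun i _ => (p2 i).ne'), ← Real.exp_add, HH, LL,
    ← Finset.add_sum_erase Finset.univ _ (Finset.mem_univ i0), h0]
  congr 1
  rw [one_mul]; ring

lemma main_aux (q : ℕ)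
    (R : Matrix (Fin q) (Fin q) ℝ) (hR : IsVertexTransitive R)
    (hconn : (SimpleGraph.fromRel fun i j : Fin q => R i j ≠ 0).Connected)
    (hrow : ∀ i, ∑ j, R i j = 1)
    (χ : ℝ → ℝ)
    (hχ : ∀ x : ℝ,
      χ x = ((R.charpoly.roots.filter (· ≠ 1)).map fun lam => 1 - lam * x).prod)
    (σ : ℝ) (hσ : 0 < σ) (m : ℕ → ℕ)
    (hm : ∃ a b : ℝ, 0 < a ∧ a ≤ b ∧ b < 1 / 2 ∧
      ∀ᶠ n : ℕ in Filter.atTop, a ≤ (m n : ℝ) / n ∧ (m n : ℝ) / n ≤ b) :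
    Filter.Tendsto (fun n : ℕ =>
        g0 R σ n (m n) /
          ((n : ℝ) ^ (2 * m n) / (2 ^ m n * ((m n).factorial : ℝ)) *
            (1 - 2 * (m n : ℝ) / n) ^ ((1 - σ) / 2) *
            ((q : ℝ) * σ) ^ (n - m n) *
            χ (2 * (m n : ℝ) / n) ^ (-(σ / 2))))
      Filter.atTop (nhds 1) := by
  obtain ⟨a, b, ha, hab, hb, hev⟩ := hm
  have hq : 0 < q := by obtain ⟨i⟩ := hconn.nonempty; exact i.pos
  have hq' : (0 : ℝ) < q := by exact_mod_cast hq
  obtain ⟨lam, φ, ho, hc, he, hroots⟩ := spec_exists hR.1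
  have hlam : ∀ j, |lam j| ≤ 1 := fun j => lam_le hR.2.1 hrow (by rw [ho]; simp) (he j)
  obtain ⟨i0, h0, h1⟩ := simple_one hR.1 hR.2.1 hrow hconn ho hc he
  have hspec : ∀ a b, R a b = ∑ i, lam i * (φ i a * φ i b) := by
    intro a b
    have : ∑ i, lam i * (φ i a * φ i b) = ∑ i, ∑ x, R a x * (φ i x * φ i b) := by
      apply Finset.sum_congr rfl
      intro i _
      rw [← mul_assoc, ← he, Finset.sum_mul]
      exact Finset.sum_congr rfl fun x _ => by ring
    rw [this, Finset.sum_comm]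
    simp [← Finset.mul_sum, hc]
  have ws := fun n => ws_of hR hq hrow hσ lam φ (fun i => by simpa [sq] using ho i i) he hspec n
  have hβ0 : 0 ≤ 2 * b := by linarith
  have hβ : 2 * b < 1 := by linarith
  obtain ⟨C, hC⟩ := hh_approx (W := q * σ) (K := q) (σ := σ) (lam := lam) hβ0 hβ (by positivity) hq'.le hσ hlam
  obtain ⟨d, hd, hlow⟩ := HH_lower σ hlam hβ0 hβ
  rw [tendsto_iff_norm_sub_tendsto_zero]
  have hlim : Filter.Tendsto (fun n : ℕ => |C| / d / (n : ℝ)) Filter.atTop (nhds 0) :=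
    tendsto_const_div_atTop_nhds_zero_nat _
  refine squeeze_zero' (Filter.Eventually.of_forall fun n => norm_nonneg _) ?_ hlim
  filter_upwards [hev, Filter.eventually_gt_atTop 0] with n hn hn0
  have hn' : (0 : ℝ) < n := by exact_mod_cast hn0
  have hmb : (m n : ℝ) ≤ b * n := by rw [← div_le_iff₀ hn']; exact hn.2
  have hM : 2 * (m n : ℝ) ≤ 2 * b * n := by linarith
  have hmn : m n ≤ n := by
    have : (m n : ℝ) ≤ n := by nlinarith
    exact_mod_cast this
  have ht : 2 * (m n : ℝ) / n ∈ Set.Icc 0 (2 * b) := ⟨by positivity, by rw [div_le_iff₀ hn']; linarith⟩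
  have hh1 := hC n _ _ hn0 (ws n) (m n) hM
  have hl := hlow _ ht
  have hHeq := HH_eq h0 h1 σ hlam hβ ht
  rw [← hroots, ← hχ] at hHeq
  rw [g0_eq R hσ hq hn0 hmn, ← hh]
  set H := HH σ lam (2 * (m n : ℝ) / n) with hHd
  set h := hh n (om R σ) (m n)
  have hH0 : 0 < H := by linarith
  have hP : 0 < Pn n (m n) := by unfold Pn; positivity
  have e : (q * σ) ^ (n - m n) * Pn n (m n) * h /
      ((n : ℝ) ^ (2 * m n) / (2 ^ m n * ((m n).factorial : ℝ)) *
            (1 - 2 * (m n : ℝ) / n) ^ ((1 - σ) / 2) *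
            ((q : ℝ) * σ) ^ (n - m n) *
            χ (2 * (m n : ℝ) / n) ^ (-(σ / 2))) = h / H := by
    have : ((n : ℝ) ^ (2 * m n) / (2 ^ m n * ((m n).factorial : ℝ)) *
            (1 - 2 * (m n : ℝ) / n) ^ ((1 - σ) / 2) *
            ((q : ℝ) * σ) ^ (n - m n) *
            χ (2 * (m n : ℝ) / n) ^ (-(σ / 2))) = (q * σ) ^ (n - m n) * Pn n (m n) * H := by
      rw [hHeq, Pn]; ring
    rw [this]
    have : 0 < (q * σ) ^ (n - m n) := by positivity
    exact mul_div_mul_left _ _ (by positivity)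
  rw [e, Real.norm_eq_abs]
  have : h / H - 1 = (h - H) / H := by field_simp
  rw [this, abs_div, abs_of_pos hH0, div_div, mul_comm d, ← div_div]
  have : |h - H| ≤ |C| / n := hh1.trans (by gcongr; exact le_abs_self C)
  gcongr

end Spec

/-- asymptotics of the weight of `(R,σ)`-multigraphs without complex
components, in the subcritical regime. -/
theorem g0_asymptotics_subcritical (q : ℕ)
    (R : Matrix (Fin q) (Fin q) ℝ) (hR : IsVertexTransitive R)
    (hconn : (SimpleGraph.fromRel fun i j : Fin q => R i j ≠ 0).Connected)
    (hrow : ∀ i, ∑ j, R i j = 1)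
    (χ : ℝ → ℝ)
    (hχ : ∀ x : ℝ,
      χ x = ((R.charpoly.roots.filter (· ≠ 1)).map fun lam => 1 - lam * x).prod)
    (σ : ℝ) (hσ : 0 < σ) (m : ℕ → ℕ)
    (hm : ∃ a b : ℝ, 0 < a ∧ a ≤ b ∧ b < 1 / 2 ∧
      ∀ᶠ n : ℕ in Filter.atTop, a ≤ (m n : ℝ) / n ∧ (m n : ℝ) / n ≤ b) :
    Filter.Tendsto (fun n : ℕ =>
        g0 R σ n (m n) /
          ((n : ℝ) ^ (2 * m n) / (2 ^ m n * ((m n).factorial : ℝ)) *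
            (1 - 2 * (m n : ℝ) / n) ^ ((1 - σ) / 2) *
            ((q : ℝ) * σ) ^ (n - m n) *
            χ (2 * (m n : ℝ) / n) ^ (-(σ / 2))))
      Filter.atTop (nhds 1) := by
  exact main_aux q R hR hconn hrow χ hχ σ hσ m hm

end

end Inhomog
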